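/- arXiv:1706.04935 — 2 statements merged into one kernel-verified Lean document; each statement's English description precedes it below -/
import Mathlib

section
/- Let D ⊆ [n]² be a diagram with columns D_j = {i : (i,j) ∈ D}. Then the Schubitope S_D equals the Minkowski sum of Schubert matroid polytopes: S_D = Σ_{j=1}^n P(SM_n(D_j)), where P(SM_n(D_j)) ⊆ ℝ^n is the convex hull of the indicator vectors of the bases of SM_n(D_j). -/
open Finset Pointwise

/-- `DomLE R S`: `R` and `S` have the same cardinality and, for each `k`, the `k`-th least
element of `R` does not exceed the `k`-th least element of `S`.  The bases of the Schubert
matroid `SM_n(S)` are exactly the `B` with `DomLE B S`. -/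
def DomLE {α : Type*} [LinearOrder α] (R S : Finset α) : Prop :=
  R.card = S.card ∧
    ∀ (k : ℕ) (hR : k < (R.sort (· ≤ ·)).length) (hS : k < (S.sort (· ≤ ·)).length),
      (R.sort (· ≤ ·)).get ⟨k, hR⟩ ≤ (S.sort (· ≤ ·)).get ⟨k, hS⟩

/-- Indicator vector `ζ^B ∈ {0,1}^n ⊆ ℝ^n` of a subset `B ⊆ [n]`. -/
def indVec {n : ℕ} (B : Finset (Fin n)) : Fin n → ℝ := fun i => if i ∈ B then 1 else 0

/-- Matroid polytope `P(SM_n(S))` of the Schubert matroid `SM_n(S)`: the convex hull in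
`ℝ^n` of the indicator vectors of its bases, i.e. of the `B` with `B ≤ S`. -/
def smPolytope {n : ℕ} (S : Finset (Fin n)) : Set (Fin n → ℝ) :=
  convexHull ℝ {x | ∃ B : Finset (Fin n), DomLE B S ∧ x = indVec B}

/-- Auxiliary greedy matching count for a parenthesis word (`true` = '(', `false` = ')'),
given the current number of unmatched open parentheses. -/
def matchedPairsAux : List Bool → ℕ → ℕ
  | [], _ => 0
  | true :: rest, o => matchedPairsAux rest (o + 1)
  | false :: rest, 0 => matchedPairsAux rest 0
  | false :: rest, o + 1 => matchedPairsAux rest o + 1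

/-- The number of paired `()`'s in a parenthesis word (`true` = '(', `false` = ')'). -/
def matchedPairs (w : List Bool) : ℕ := matchedPairsAux w 0

/-- Column `j` of a diagram `D ⊆ [n]²`: the set `D_j = {i : (i,j) ∈ D}`. -/
def colSet {n : ℕ} (D : Finset (Fin n × Fin n)) (j : Fin n) : Finset (Fin n) :=
  Finset.univ.filter fun i => (i, j) ∈ D

/-- The parenthesis part of `word_{j,I}(D)`: reading rows `i` from top to bottom, record
'(' (= `true`) if `(i,j) ∉ D` and `i ∈ I`, and ')' (= `false`) if `(i,j) ∈ D` and `i ∉ I`.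
(The `⋆`'s, at positions with `(i,j) ∈ D` and `i ∈ I`, play no role in the matching.) -/
def colWord {n : ℕ} (D : Finset (Fin n × Fin n)) (j : Fin n) (I : Finset (Fin n)) :
    List Bool :=
  (List.finRange n).filterMap fun i =>
    if (i, j) ∈ D then (if i ∈ I then none else some false)
    else (if i ∈ I then some true else none)

/-- `θ_D^j(I)`: the number of paired `()`'s plus the number of `⋆`'s in `word_{j,I}(D)`. -/
def thetaCol {n : ℕ} (D : Finset (Fin n × Fin n)) (j : Fin n) (I : Finset (Fin n)) : ℕ :=
  matchedPairs (colWord D j I) + (colSet D j ∩ I).card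

/-- `θ_D(I) = Σ_{j=1}^n θ_D^j(I)`. -/
def theta {n : ℕ} (D : Finset (Fin n × Fin n)) (I : Finset (Fin n)) : ℕ :=
  ∑ j : Fin n, thetaCol D j I

/-- The Schubitope `S_D` of a diagram `D ⊆ [n]²`. -/
def schubitope {n : ℕ} (D : Finset (Fin n × Fin n)) : Set (Fin n → ℝ) :=
  {a | (∀ i, 0 ≤ a i) ∧ (∑ i, a i) = (D.card : ℝ) ∧
    ∀ I : Finset (Fin n), ∑ i ∈ I, a i ≤ (theta D I : ℝ)}

/-- Value of the cut at level `t`. -/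
def cutVal {n : ℕ} (S I : Finset (Fin n)) (t : ℕ) : ℕ :=
  (S.filter fun i => t ≤ i.val).card + (I.filter fun i => i.val < t).card

/-- The rank function of the Schubert matroid, characterized as minimum of cuts. -/
def IsRank {n : ℕ} (S : Finset (Fin n)) (r : Finset (Fin n) → ℕ) : Prop :=
  (∀ I t, r I ≤ cutVal S I t) ∧ ∀ I, ∃ t, r I = cutVal S I t

theorem list_rank {α : Type*} [DecidableEq α] (S I : Finset α) (l : List α) : ∀ o g : ℕ,
    g = matchedPairsAux (l.filterMap fun i =>
      if i ∈ S then (if i ∈ I then none else some false)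
      else (if i ∈ I then some true else none)) o + l.countP (fun i => i ∈ S ∧ i ∈ I) →
    g ≤ l.countP (fun i => i ∈ S) ∧
    (∀ k, g ≤ o + (l.take k).countP (fun i => i ∈ I) + (l.drop k).countP (fun i => i ∈ S)) ∧
    (g = l.countP (fun i => i ∈ S) ∨
      ∃ k, g = o + (l.take k).countP (fun i => i ∈ I) + (l.drop k).countP (fun i => i ∈ S)) := by
  induction l with
  | nil => intro o g hg; simp [matchedPairsAux] at hg ⊢; omega
  | cons x l ih =>
    intro o g hg
    have red : ∀ (o' g' δ : ℕ), g = g' + δ →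
        g' = matchedPairsAux (l.filterMap fun i =>
          if i ∈ S then (if i ∈ I then none else some false)
          else (if i ∈ I then some true else none)) o' + l.countP (fun i => i ∈ S ∧ i ∈ I) →
        (x ∈ S ∧ x ∈ I ∧ δ = 1 ∧ o' = o ∨ x ∈ S ∧ x ∉ I ∧ δ = 0 ∧ o' = 0 ∧ o = 0 ∨
          x ∈ S ∧ x ∉ I ∧ δ = 1 ∧ o = o' + 1 ∨ x ∉ S ∧ x ∈ I ∧ δ = 0 ∧ o' = o + 1 ∨
          x ∉ S ∧ x ∉ I ∧ δ = 0 ∧ o' = o) →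
        g ≤ (x :: l).countP (fun i => i ∈ S) ∧
        (∀ k, g ≤ o + ((x :: l).take k).countP (fun i => i ∈ I) +
          ((x :: l).drop k).countP (fun i => i ∈ S)) ∧
        (g = (x :: l).countP (fun i => i ∈ S) ∨
          ∃ k, g = o + ((x :: l).take k).countP (fun i => i ∈ I) +
            ((x :: l).drop k).countP (fun i => i ∈ S)) := by
      intro o' g' δ hδ hg' hc
      obtain ⟨h1, h2, h3⟩ := ih o' g' hg'
      have e1 : (x :: l).countP (fun i => i ∈ S) =
          l.countP (fun i => i ∈ S) + if x ∈ S then 1 else 0 := by simp [List.countP_cons]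
      have e2 : ∀ k, ((x :: l).take (k+1)).countP (fun i => i ∈ I) =
          (l.take k).countP (fun i => i ∈ I) + if x ∈ I then 1 else 0 := by
        simp [List.countP_cons]
      have h20 := h2 0
      simp only [List.take_zero, List.drop_zero, List.countP_nil] at h20
      refine ⟨?_, ?_, ?_⟩
      · rw [e1]; rcases hc with h | h | h | h | h <;> simp [h] <;> omega
      · intro k
        cases k with
        | zero =>
          simp only [List.take_zero, List.drop_zero, List.countP_nil]
          rw [e1]; rcases hc with h | h | h | h | h <;> simp [h] <;> omega
        | succ k =>
          have := h2 k
          rw [e2, List.drop_succ_cons]; rcases hc with h | h | h | h | h <;> simp [h] <;> omega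
      · rcases h3 with h3 | ⟨k, h3⟩
        · by_cases h0 : x ∈ S ∧ x ∉ I ∧ δ = 0 ∧ o' = 0 ∧ o = 0
          · right; refine ⟨0+1, ?_⟩
            rw [e2, List.drop_succ_cons]; simp [h0]; omega
          · left
            rw [e1]; rcases hc with h | h | h | h | h
            · simp [h]; omega
            · exact absurd h h0
            all_goals simp [h]; omega
        · right; refine ⟨k+1, ?_⟩
          rw [e2, List.drop_succ_cons]; rcases hc with h | h | h | h | h <;> simp [h] <;> omega
    by_cases hS : x ∈ S <;> by_cases hI : x ∈ I
    · exact red o _ 1 (by rw [hg]; simp [hS, hI]; omega) rfl (by simp [hS, hI])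
    · cases o with
      | zero => exact red 0 _ 0 (by rw [hg]; simp [hS, hI, matchedPairsAux]) rfl (by simp [hS, hI])
      | succ o => exact red o _ 1 (by rw [hg]; simp [hS, hI, matchedPairsAux]; omega) rfl (by simp [hS, hI])
    · exact red (o+1) _ 0 (by rw [hg]; simp [hS, hI, matchedPairsAux]) rfl (by simp [hS, hI])
    · exact red o _ 0 (by rw [hg]; simp [hS, hI]) rfl (by simp [hS, hI])

theorem countP_eq_card {α : Type*} [DecidableEq α] (S : Finset α) (l : List α) (hl : l.Nodup) :
    l.countP (fun i => i ∈ S) = (S.filter fun i => i ∈ l).card := by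
  rw [List.countP_eq_length_filter, ← List.toFinset_card_of_nodup (hl.filter _)]
  congr 1
  ext i
  simp [and_comm]

theorem mem_take_finRange {n : ℕ} (k : ℕ) (i : Fin n) :
    i ∈ (List.finRange n).take k ↔ i.val < k := by
  rw [List.mem_take_iff_getElem]
  constructor
  · rintro ⟨j, hj, rfl⟩
    simp at hj ⊢; omega
  · intro h
    exact ⟨i.val, by simp; omega, by simp⟩

theorem mem_drop_finRange {n : ℕ} (k : ℕ) (i : Fin n) :
    i ∈ (List.finRange n).drop k ↔ k ≤ i.val := by
  rw [List.mem_drop_iff_getElem]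
  constructor
  · rintro ⟨j, hj, rfl⟩
    simp
  · intro h
    exact ⟨i.val - k, by simp; omega, by ext; simp; omega⟩

theorem thetaCol_isRank {n : ℕ} (D : Finset (Fin n × Fin n)) (j : Fin n) :
    IsRank (colSet D j) (thetaCol D j) := by
  have key : ∀ I, thetaCol D j I = matchedPairsAux ((List.finRange n).filterMap fun i =>
      if i ∈ colSet D j then (if i ∈ I then none else some false)
      else (if i ∈ I then some true else none)) 0 +
        (List.finRange n).countP (fun i => i ∈ colSet D j ∧ i ∈ I) := by
    intro I
    have : (List.finRange n).countP (fun i => i ∈ colSet D j ∧ i ∈ I) = (colSet D j ∩ I).card := by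
      have := countP_eq_card (colSet D j ∩ I) (List.finRange n) (List.nodup_finRange n)
      simpa using this
    rw [this]
    simp [thetaCol, matchedPairs, colWord, colSet]
  have hc : ∀ I k, 0 + ((List.finRange n).take k).countP (fun i => i ∈ I) +
      ((List.finRange n).drop k).countP (fun i => i ∈ colSet D j) = cutVal (colSet D j) I k := by
    intro I k
    rw [countP_eq_card _ _ ((List.nodup_finRange n).sublist (List.take_sublist _ _)),
      countP_eq_card _ _ ((List.nodup_finRange n).sublist (List.drop_sublist _ _))]
    simp only [mem_take_finRange, mem_drop_finRange, cutVal]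
    omega
  refine ⟨fun I t => ?_, fun I => ?_⟩
  · rw [key, ← hc]
    exact (list_rank (colSet D j) I (List.finRange n) 0 _ rfl).2.1 t
  · rw [key]
    rcases (list_rank (colSet D j) I (List.finRange n) 0 _ rfl).2.2 with h | ⟨k, h⟩
    · refine ⟨0, ?_⟩
      rw [h, ← hc]; simp
    · exact ⟨k, by rw [h, hc]⟩

theorem cutVal_insert {n : ℕ} (S I : Finset (Fin n)) (x : Fin n) (hx : x ∉ I) (t : ℕ) :
    cutVal S (insert x I) t = cutVal S I t + if x.val < t then 1 else 0 := by
  unfold cutVal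
  rw [Finset.filter_insert]
  split_ifs with h
  · rw [Finset.card_insert_of_notMem (by simp [hx])]; omega
  · omega

theorem IsRank.step {n : ℕ} {S : Finset (Fin n)} {r : Finset (Fin n) → ℕ} (h : IsRank S r)
    (I : Finset (Fin n)) (x : Fin n) (hx : x ∉ I) :
    r (insert x I) = r I ∨ r (insert x I) = r I + 1 := by
  obtain ⟨t, ht⟩ := h.2 I
  obtain ⟨t', ht'⟩ := h.2 (insert x I)
  have h1 := h.1 (insert x I) t
  have h2 := h.1 I t'
  rw [cutVal_insert S I x hx] at h1 ht'
  split_ifs at * <;> omega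

theorem IsRank.dimin {n : ℕ} {S : Finset (Fin n)} {r : Finset (Fin n) → ℕ} (h : IsRank S r)
    (J I : Finset (Fin n)) (hJ : J ⊆ I) (x : Fin n) (hx : x ∉ I)
    (hr : r (insert x I) = r I + 1) : r (insert x J) = r J + 1 := by
  have hxJ : x ∉ J := fun hh => hx (hJ hh)
  rcases h.step J x hxJ with h0 | h0
  swap
  · exact h0
  exfalso
  obtain ⟨t, ht⟩ := h.2 (insert x J)
  obtain ⟨s, hs⟩ := h.2 I
  have a1 := h.1 J t
  have a2 := h.1 J s
  have a3 := h.1 (insert x I) t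
  have a4 := h.1 (insert x I) s
  rw [cutVal_insert S I x hx] at a3 a4
  rw [cutVal_insert S J x hxJ] at ht
  have hxt : ¬ x.val < t := by intro hh; simp [hh] at ht; omega
  have hxs : x.val < s := by by_contra hh; simp [hh] at a4; omega
  simp [hxt] at ht a3
  have hts : t ≤ s := by omega
  have sp : ∀ K : Finset (Fin n), (K.filter fun i => i.val < s).card =
      (K.filter fun i => i.val < t).card + (K.filter fun i => t ≤ i.val ∧ i.val < s).card := by
    intro K
    rw [← Finset.card_union_of_disjoint]
    · congr 1
      ext i
      simp only [Finset.mem_union, Finset.mem_filter]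
      constructor
      · rintro ⟨h1, h2⟩
        by_cases h3 : i.val < t
        · exact Or.inl ⟨h1, h3⟩
        · exact Or.inr ⟨h1, by omega, h2⟩
      · rintro (⟨h1, h2⟩ | ⟨h1, h2, h3⟩)
        · exact ⟨h1, by omega⟩
        · exact ⟨h1, h3⟩
    · rw [Finset.disjoint_left]
      intro i hi hi'
      simp only [Finset.mem_filter] at hi hi'
      omega
  have m : (J.filter fun i => t ≤ i.val ∧ i.val < s).card ≤
      (I.filter fun i => t ≤ i.val ∧ i.val < s).card :=
    Finset.card_le_card (Finset.filter_subset_filter _ hJ)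
  have sJ := sp J
  have sI := sp I
  unfold cutVal at *
  omega

theorem IsRank.empty {n : ℕ} {S : Finset (Fin n)} {r : Finset (Fin n) → ℕ} (h : IsRank S r) :
    r ∅ = 0 := by
  have := h.1 ∅ n
  unfold cutVal at this
  rw [Finset.filter_false_of_mem (s := S) (fun i _ => by omega)] at this
  simpa using this

theorem IsRank.univ {n : ℕ} {S : Finset (Fin n)} {r : Finset (Fin n) → ℕ} (h : IsRank S r) :
    r Finset.univ = S.card := by
  apply le_antisymm
  · have := h.1 Finset.univ 0
    unfold cutVal at this
    simpa using this
  · obtain ⟨t, ht⟩ := h.2 Finset.univ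
    rw [ht]
    unfold cutVal
    rw [← Finset.card_filter_add_card_filter_not (s := S) (fun i => t ≤ i.val)]
    have : (S.filter fun i => ¬ t ≤ i.val) ⊆ (Finset.univ.filter fun i : Fin n => i.val < t) := by
      intro i; simp
    have := Finset.card_le_card this
    omega

/-- Invariant of the greedy algorithm. -/
def Greedy {n : ℕ} (r : Finset (Fin n) → ℕ) (s B : Finset (Fin n)) : Prop :=
  B ⊆ s ∧ B.card = r s ∧ ∀ X, (B ∩ X).card ≤ r (s ∩ X)

theorem greedy_step {n : ℕ} {S : Finset (Fin n)} {r : Finset (Fin n) → ℕ} (h : IsRank S r)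
    {s B : Finset (Fin n)} (g : Greedy r s B) (x : Fin n) (hx : x ∉ s) :
    ∃ B', Greedy r (insert x s) B' ∧ ∀ i ∈ s, (i ∈ B' ↔ i ∈ B) := by
  obtain ⟨g1, g2, g3⟩ := g
  have hxB : x ∉ B := fun hh => hx (g1 hh)
  rcases h.step s x hx with h0 | h0
  · refine ⟨B, ⟨fun i hi => Finset.mem_insert_of_mem (g1 hi), by omega, fun X => ?_⟩, by simp⟩
    by_cases hX : x ∈ X
    · rw [Finset.insert_inter_of_mem hX]
      have := h.step (s ∩ X) x (by simp [hx])
      have := g3 X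
      omega
    · rw [Finset.insert_inter_of_notMem hX]; exact g3 X
  · refine ⟨insert x B, ⟨Finset.insert_subset_insert _ g1, ?_, fun X => ?_⟩, ?_⟩
    · rw [Finset.card_insert_of_notMem hxB]; omega
    · by_cases hX : x ∈ X
      · rw [Finset.insert_inter_of_mem hX, Finset.insert_inter_of_mem hX,
          Finset.card_insert_of_notMem (by simp [hxB]),
          h.dimin (s ∩ X) s Finset.inter_subset_left x hx h0]
        have := g3 X
        omega
      · rw [Finset.insert_inter_of_notMem hX, Finset.insert_inter_of_notMem hX]; exact g3 X
    · intro i hi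
      have : i ≠ x := fun hh => hx (hh ▸ hi)
      simp [this]

theorem card_filter_orderEmb {n m : ℕ} (S : Finset (Fin n)) (hS : S.card = m) (t : ℕ) :
    (S.filter fun i => i.val < t).card =
      (Finset.univ.filter fun k : Fin m => (S.orderEmbOfFin hS k).val < t).card := by
  rw [← Finset.card_map (S.orderEmbOfFin hS).toEmbedding]
  congr 1
  ext i
  simp only [Finset.mem_filter, Finset.mem_map, Finset.mem_univ, true_and]
  constructor
  · rintro ⟨h1, h2⟩
    have : i ∈ Set.range (S.orderEmbOfFin hS) := by simpa using h1
    obtain ⟨k, rfl⟩ := this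
    exact ⟨k, h2, rfl⟩
  · rintro ⟨k, h1, rfl⟩
    exact ⟨Finset.orderEmbOfFin_mem S hS k, h1⟩

theorem domLE_iff {n : ℕ} (B S : Finset (Fin n)) : DomLE B S ↔ B.card = S.card ∧
    ∀ t : ℕ, (S.filter fun i => i.val < t).card ≤ (B.filter fun i => i.val < t).card := by
  unfold DomLE
  refine and_congr_right fun hc => ?_
  have e : (∀ (k : ℕ) (hR : k < (B.sort (· ≤ ·)).length) (hS : k < (S.sort (· ≤ ·)).length),
      (B.sort (· ≤ ·)).get ⟨k, hR⟩ ≤ (S.sort (· ≤ ·)).get ⟨k, hS⟩) ↔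
      ∀ k : Fin S.card, B.orderEmbOfFin hc k ≤ S.orderEmbOfFin rfl k := by
    constructor
    · intro h k
      exact h k.val (by simp [hc]) (by simp)
    · intro h k h1 h2
      exact h ⟨k, by simpa using h2⟩
  rw [e]
  constructor
  · intro h t
    rw [card_filter_orderEmb B hc, card_filter_orderEmb S rfl]
    apply Finset.card_le_card
    intro k
    simp only [Finset.mem_filter, Finset.mem_univ, true_and]
    intro hk
    have := h k
    rw [Fin.le_def] at this
    omega
  · intro h k
    by_contra hk
    have h1 := h (B.orderEmbOfFin hc k).val
    rw [card_filter_orderEmb B hc, card_filter_orderEmb S rfl] at h1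
    have h2 : (Finset.univ.filter fun k' : Fin S.card =>
        (B.orderEmbOfFin hc k').val < (B.orderEmbOfFin hc k).val) ⊆ Finset.Iio k := by
      intro k'
      simp
    have h3 : Finset.Iic k ⊆ (Finset.univ.filter fun k' : Fin S.card =>
        (S.orderEmbOfFin rfl k').val < (B.orderEmbOfFin hc k).val) := by
      intro k' hk'
      simp only [Finset.mem_filter, Finset.mem_univ, true_and]
      rw [Finset.mem_Iic] at hk'
      have : S.orderEmbOfFin rfl k' ≤ S.orderEmbOfFin rfl k := (S.orderEmbOfFin rfl).monotone hk'
      exact lt_of_le_of_lt this (not_le.mp hk)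
    have := Finset.card_le_card h2
    have := Finset.card_le_card h3
    simp at *
    omega

theorem card_split {n : ℕ} (S : Finset (Fin n)) (t : ℕ) :
    (S.filter fun i => i.val < t).card + (S.filter fun i => t ≤ i.val).card = S.card := by
  rw [← Finset.card_filter_add_card_filter_not (s := S) (fun i => i.val < t)]
  simp

theorem greedy_dom {n : ℕ} {S : Finset (Fin n)} {r : Finset (Fin n) → ℕ} (h : IsRank S r)
    {B : Finset (Fin n)} (g : Greedy r Finset.univ B) : DomLE B S := by
  obtain ⟨g1, g2, g3⟩ := g
  rw [h.univ] at g2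
  rw [domLE_iff]
  refine ⟨g2, fun t => ?_⟩
  have h1 := g3 (Finset.univ.filter fun i => t ≤ i.val)
  have h2 := h.1 (Finset.univ.filter fun i => t ≤ i.val) t
  unfold cutVal at h2
  rw [Finset.filter_filter, Finset.filter_false_of_mem (p := fun i : Fin n => t ≤ i.val ∧ i.val < t)
    (fun i _ => by omega)] at h2
  rw [Finset.univ_inter, Finset.inter_filter, Finset.inter_univ] at h1
  have := card_split B t
  have := card_split S t
  simp at h2
  omega

theorem dom_le_rank {n : ℕ} {S : Finset (Fin n)} {r : Finset (Fin n) → ℕ} (h : IsRank S r)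
    {B : Finset (Fin n)} (hB : DomLE B S) (I : Finset (Fin n)) : (I ∩ B).card ≤ r I := by
  rw [domLE_iff] at hB
  obtain ⟨t, ht⟩ := h.2 I
  rw [ht]
  unfold cutVal
  have := hB.2 t
  have := hB.1
  have := card_split B t
  have := card_split S t
  have := card_split (I ∩ B) t
  have a1 : ((I ∩ B).filter fun i => i.val < t).card ≤ (I.filter fun i => i.val < t).card :=
    Finset.card_le_card (Finset.filter_subset_filter _ Finset.inter_subset_left)
  have a2 : ((I ∩ B).filter fun i => t ≤ i.val).card ≤ (B.filter fun i => t ≤ i.val).card :=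
    Finset.card_le_card (Finset.filter_subset_filter _ Finset.inter_subset_right)
  omega

theorem sum_indVec {n : ℕ} (I B : Finset (Fin n)) :
    ∑ i ∈ I, indVec B i = ((I ∩ B).card : ℝ) := by
  simp [indVec, Finset.sum_ite_mem]

theorem card_diagram {n : ℕ} (D : Finset (Fin n × Fin n)) :
    D.card = ∑ j, (colSet D j).card := by
  rw [Finset.card_eq_sum_card_fiberwise (f := Prod.snd) (t := Finset.univ) (by intro; simp)]
  refine Finset.sum_congr rfl fun j _ => ?_
  symm
  refine Finset.card_bij (fun i _ => (i, j)) ?_ ?_ ?_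
  · intro i; simp [colSet]
  · intro a _ b _ h; simpa using h
  · rintro ⟨a, b⟩ h
    simp only [Finset.mem_filter] at h
    obtain ⟨h1, rfl⟩ := h
    exact ⟨a, by simpa [colSet] using h1, rfl⟩

theorem smPolytope_sub {n : ℕ} {S : Finset (Fin n)} {r : Finset (Fin n) → ℕ} (h : IsRank S r)
    {a : Fin n → ℝ} (ha : a ∈ smPolytope S) :
    (∀ i, 0 ≤ a i) ∧ ∑ i, a i = S.card ∧ ∀ I : Finset (Fin n), ∑ i ∈ I, a i ≤ r I := by
  have : smPolytope S ⊆ {a | (∀ i, 0 ≤ a i) ∧ ∑ i, a i = S.card ∧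
      ∀ I : Finset (Fin n), ∑ i ∈ I, a i ≤ r I} := by
    apply convexHull_min
    · rintro x ⟨B, hB, rfl⟩
      refine ⟨fun i => ?_, ?_, fun I => ?_⟩
      · unfold indVec; split_ifs <;> norm_num
      · rw [sum_indVec, Finset.univ_inter, hB.1]
      · rw [sum_indVec]; exact_mod_cast dom_le_rank h hB I
    · rintro x ⟨x1, x2, x3⟩ y ⟨y1, y2, y3⟩ p q hp hq hpq
      refine ⟨fun i => ?_, ?_, fun I => ?_⟩
      · have := x1 i
        have := y1 i
        simp only [Pi.add_apply, Pi.smul_apply, smul_eq_mul]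
        positivity
      · simp only [Pi.add_apply, Pi.smul_apply, smul_eq_mul, Finset.sum_add_distrib,
          ← Finset.mul_sum, x2, y2]
        rw [← add_mul, hpq, one_mul]
      · simp only [Pi.add_apply, Pi.smul_apply, smul_eq_mul, Finset.sum_add_distrib,
          ← Finset.mul_sum]
        calc _ ≤ p * r I + q * r I := by gcongr; exact x3 I; exact y3 I
          _ = r I := by rw [← add_mul, hpq, one_mul]
  exact this ha

theorem greedy_main {n : ℕ} (D : Finset (Fin n × Fin n)) (a w : Fin n → ℝ)
    (ha : ∀ I : Finset (Fin n), ∑ i ∈ I, a i ≤ (theta D I : ℝ)) (s : Finset (Fin n)) :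
    ∃ B : Fin n → Finset (Fin n), (∀ j, Greedy (thetaCol D j) s (B j)) ∧
      ∀ c : ℝ, (∀ i ∈ s, c ≤ w i) →
        ∑ i ∈ s, (w i - c) * (a i - ∑ j, indVec (B j) i) ≤ 0 := by
  induction s using Finset.induction_on_min_value w with
  | empty =>
    refine ⟨fun _ => ∅, fun j => ⟨by simp, by simp [(thetaCol_isRank D j).empty], fun X => by simp⟩, ?_⟩
    intro c _; simp
  | insert x s hx hmin ih =>
    obtain ⟨B, hB, hle⟩ := ih
    choose B' hB' hBB using fun j => greedy_step (thetaCol_isRank D j) (hB j) x hx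
    refine ⟨B', hB', fun c hc => ?_⟩
    have h1 := hle (w x) hmin
    have h2 : ∑ i ∈ s, (w i - w x) * (a i - ∑ j, indVec (B j) i) =
        ∑ i ∈ s, (w i - w x) * (a i - ∑ j, indVec (B' j) i) := by
      refine Finset.sum_congr rfl fun i hi => ?_
      simp only [indVec, hBB _ i hi]
    rw [h2] at h1
    have h3 : ∑ i ∈ insert x s, (a i - ∑ j, indVec (B' j) i) ≤ 0 := by
      rw [Finset.sum_sub_distrib, Finset.sum_comm]
      have : ∑ j, ∑ i ∈ insert x s, indVec (B' j) i = (theta D (insert x s) : ℝ) := by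
        unfold theta
        push_cast
        refine Finset.sum_congr rfl fun j _ => ?_
        rw [sum_indVec, Finset.inter_eq_right.mpr (hB' j).1, (hB' j).2.1]
      rw [this]
      linarith [ha (insert x s)]
    have h4 : 0 ≤ w x - c := by linarith [hc x (Finset.mem_insert_self _ _)]
    have h5 : ∑ i ∈ insert x s, (w i - c) * (a i - ∑ j, indVec (B' j) i) =
        ∑ i ∈ insert x s, (w i - w x) * (a i - ∑ j, indVec (B' j) i) +
        (w x - c) * ∑ i ∈ insert x s, (a i - ∑ j, indVec (B' j) i) := by
      rw [Finset.mul_sum, ← Finset.sum_add_distrib]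
      refine Finset.sum_congr rfl fun i _ => ?_
      ring
    rw [h5, Finset.sum_insert hx, sub_self, zero_mul, zero_add]
    have := mul_nonpos_of_nonneg_of_nonpos h4 h3
    linarith

theorem support_main {n : ℕ} (D : Finset (Fin n × Fin n)) (a w : Fin n → ℝ)
    (ha : a ∈ schubitope D) :
    ∃ B : Fin n → Finset (Fin n), (∀ j, DomLE (B j) (colSet D j)) ∧
      ∑ i, w i * a i ≤ ∑ i, w i * ∑ j, indVec (B j) i := by
  obtain ⟨B, hB, h⟩ := greedy_main D a w ha.2.2 Finset.univ
  refine ⟨B, fun j => greedy_dom (thetaCol_isRank D j) (hB j), ?_⟩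
  obtain ⟨c, hc⟩ := (Set.finite_range w).bddBelow
  have h1 := h c (fun i _ => hc ⟨i, rfl⟩)
  have h2 : ∑ i, (a i - ∑ j, indVec (B j) i) = 0 := by
    rw [Finset.sum_sub_distrib, Finset.sum_comm, ha.2.1, card_diagram]
    push_cast
    rw [sub_eq_zero]
    refine Finset.sum_congr rfl fun j _ => ?_
    rw [sum_indVec, Finset.univ_inter, (greedy_dom (thetaCol_isRank D j) (hB j)).1]
  have h3 : ∑ i, (w i - c) * (a i - ∑ j, indVec (B j) i) = ∑ i, w i * a i -
      ∑ i, w i * ∑ j, indVec (B j) i - c * ∑ i, (a i - ∑ j, indVec (B j) i) := by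
    rw [Finset.mul_sum, ← Finset.sum_sub_distrib, ← Finset.sum_sub_distrib]
    refine Finset.sum_congr rfl fun i _ => ?_
    ring
  rw [h3, h2] at h1
  linarith

/-- The Schubitope of a diagram `D ⊆ [n]²` equals the Minkowski sum of the Schubert matroid
polytopes of its columns: `S_D = Σ_{j=1}^n P(SM_n(D_j))`. -/
theorem stmt3 (n : ℕ) (D : Finset (Fin n × Fin n)) :
    schubitope D = ∑ j : Fin n, smPolytope (colSet D j) := by
  apply Set.Subset.antisymm
  · intro a ha
    by_contra hna
    have hconv : Convex ℝ (∑ j : Fin n, smPolytope (colSet D j)) :=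
      convex_sum _ fun j _ => convex_convexHull ℝ _
    have hcl : IsClosed (∑ j : Fin n, smPolytope (colSet D j)) := by
      have : IsCompact (∑ j : Fin n, smPolytope (colSet D j)) := by
        refine Finset.sum_induction _ IsCompact (fun _ _ h1 h2 => h1.add h2) ?_ ?_
        · exact isCompact_singleton
        · intro j _
          apply Set.Finite.isCompact_convexHull
          refine (Set.finite_range (fun B : Finset (Fin n) => indVec B)).subset ?_
          rintro x ⟨B, _, rfl⟩
          exact ⟨B, rfl⟩
      exact this.isClosed
    obtain ⟨f, u, hf1, hf2⟩ := geometric_hahn_banach_closed_point hconv hcl hna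
    have hf : ∀ x : Fin n → ℝ, f x = ∑ i, f (Pi.single i 1) * x i := by
      intro x
      conv_lhs => rw [← Finset.univ_sum_single x]
      rw [map_sum]
      refine Finset.sum_congr rfl fun i _ => ?_
      have : (Pi.single i (x i) : Fin n → ℝ) = x i • Pi.single i 1 := by
        rw [← Pi.single_smul, smul_eq_mul, mul_one]
      rw [this, map_smul, smul_eq_mul, mul_comm]
    obtain ⟨B, hB, hle⟩ := support_main D a (fun i => f (Pi.single i 1)) ha
    have hmem : ∑ j, indVec (B j) ∈ ∑ j : Fin n, smPolytope (colSet D j) :=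
      Set.finsetSum_mem_finsetSum _ _ _ fun j _ => subset_convexHull ℝ _ ⟨B j, hB j, rfl⟩
    have h1 := hf1 _ hmem
    rw [hf] at h1 hf2
    simp only [Finset.sum_apply] at h1
    linarith
  · intro a ha
    rw [Set.mem_finsetSum] at ha
    obtain ⟨g, hg, rfl⟩ := ha
    have hg' := fun j => smPolytope_sub (thetaCol_isRank D j) (hg (i := j) (Finset.mem_univ j))
    refine ⟨fun i => ?_, ?_, fun I => ?_⟩
    · rw [Finset.sum_apply]
      exact Finset.sum_nonneg fun j _ => (hg' j).1 i
    · simp only [Finset.sum_apply]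
      rw [Finset.sum_comm, card_diagram]
      push_cast
      exact Finset.sum_congr rfl fun j _ => (hg' j).2.1
    · simp only [Finset.sum_apply]
      rw [Finset.sum_comm]
      unfold theta
      push_cast
      exact Finset.sum_le_sum fun j _ => (hg' j).2.2 I
end

section
/- For every permutation w ∈ S_n, the Schubert polynomial 𝔖_w has saturated Newton polytope: every lattice point of the Newton polytope of 𝔖_w is the exponent vector of a monomial appearing with nonzero coefficient in 𝔖_w. -/
open Finset MvPolynomial

/-- The Newton polytope of a multivariate polynomial: the convex hull of the exponent
vectors of the monomials appearing with nonzero coefficient. -/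
def newtonPolytope {σ : Type*} (f : MvPolynomial σ ℤ) : Set (σ → ℝ) :=
  convexHull ℝ ((fun (d : σ →₀ ℕ) (i : σ) => ((d i : ℕ) : ℝ)) '' ↑f.support)

namespace SNP

/-- A potential that decreases strictly when an ascent is swapped. -/
def Phi {n : ℕ} (w : Equiv.Perm (Fin n)) : ℕ := ∑ r, r.val * (w r).val

lemma Phi_lt {n : ℕ} (w : Equiv.Perm (Fin n)) (i j : Fin n) (hij : i < j) (h : w i < w j) :
    Phi (w * Equiv.swap i j) < Phi w := by
  unfold Phi
  have hj : j ∈ (univ : Finset (Fin n)).erase i := by simp [hij.ne']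
  rw [← Finset.add_sum_erase univ _ (mem_univ i), ← Finset.add_sum_erase univ _ (mem_univ i),
    ← Finset.add_sum_erase _ _ hj, ← Finset.add_sum_erase _ _ hj]
  have : ∑ x ∈ (univ.erase i).erase j, x.val * ((w * Equiv.swap i j) x).val
      = ∑ x ∈ (univ.erase i).erase j, x.val * (w x).val := by
    apply Finset.sum_congr rfl
    intro x hx
    simp only [mem_erase, mem_univ, and_true] at hx
    rw [Equiv.Perm.mul_apply, Equiv.swap_apply_of_ne_of_ne hx.2 hx.1]
  rw [this]
  simp only [Equiv.Perm.mul_apply, Equiv.swap_apply_left, Equiv.swap_apply_right]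
  have h1 : i.val < j.val := hij
  have h2 : (w i).val < (w j).val := h
  nlinarith

/-- Positions `j` such that `w * (i j)` covers `w`. -/
def cov {n : ℕ} (w : Equiv.Perm (Fin n)) (i : Fin n) : Finset (Fin n) :=
  univ.filter fun j => i < j ∧ w i < w j ∧ ∀ k, i < k → k < j → ¬ (w i < w k ∧ w k < w j)

lemma mem_cov {n : ℕ} {w : Equiv.Perm (Fin n)} {i j : Fin n} :
    j ∈ cov w i ↔ i < j ∧ w i < w j ∧ ∀ k, i < k → k < j → ¬ (w i < w k ∧ w k < w j) := by
  simp [cov]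

/-- `i` is the first position where `w` fails to be the longest permutation. -/
def Good {n : ℕ} (w : Equiv.Perm (Fin n)) (i : Fin n) : Prop :=
  (∀ r, r < i → ∀ s, r < s → w s < w r) ∧ ∃ s, i < s ∧ w i < w s

lemma eq_rev {n : ℕ} (w : Equiv.Perm (Fin n)) (h : ∀ r s, r < s → w s < w r) :
    w = Fin.revPerm := by
  have h1 : StrictMono (fun r => Fin.rev (w r)) := by
    intro r s hrs
    simpa using h r s hrs
  have h2 : (fun r => Fin.rev (w r)) = id :=
    (StrictMono.range_inj h1 strictMono_id).1 (by
      rw [Set.range_id]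
      exact Function.Surjective.range_eq (Fin.revPerm.surjective.comp w.surjective))
  ext r
  have := congrFun h2 r
  simp only [id] at this
  rw [Fin.revPerm_apply, ← this, Fin.rev_rev]
  rw [this]

lemma exists_good {n : ℕ} (w : Equiv.Perm (Fin n)) (h : w ≠ Fin.revPerm) : ∃ i, Good w i := by
  classical
  have h1 : ∃ i, ∃ s, i < s ∧ w i < w s := by
    by_contra hc
    push Not at hc
    apply h
    apply eq_rev
    intro r s hrs
    exact lt_of_le_of_ne (hc r s hrs) (fun e => hrs.ne' (w.injective e))
  have hne : (univ.filter fun i => ∃ s, i < s ∧ w i < w s).Nonempty := by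
    obtain ⟨i, hi⟩ := h1
    exact ⟨i, by simpa using hi⟩
  refine ⟨_, ?_, (mem_filter.1 (Finset.min'_mem _ hne)).2⟩
  intro r hr s hrs
  by_contra hc
  have hlt : w r < w s := lt_of_le_of_ne (not_lt.1 hc) (fun e => hrs.ne (w.injective e))
  have hmem : r ∈ univ.filter fun i => ∃ s, i < s ∧ w i < w s :=
    mem_filter.2 ⟨mem_univ r, s, hrs, hlt⟩
  exact absurd hr (not_lt.2 (Finset.min'_le _ r hmem))

/-- The defining properties of Schubert polynomials. -/
def IsSchub {n : ℕ} (S : Equiv.Perm (Fin n) → MvPolynomial (Fin n) ℤ) : Prop :=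
  S Fin.revPerm = (∏ i : Fin n, X i ^ (n - 1 - (i : ℕ))) ∧
  ∀ (w : Equiv.Perm (Fin n)) (i j : Fin n), (i : ℕ) + 1 = (j : ℕ) → w i < w j →
      (X i - X j) * S w =
        S (w * Equiv.swap i j) - rename (Equiv.swap i j) (S (w * Equiv.swap i j))

lemma X_sub_ne {n : ℕ} {i j : Fin n} (h : i ≠ j) :
    (X i - X j : MvPolynomial (Fin n) ℤ) ≠ 0 := by
  rw [sub_ne_zero]
  exact fun e => h (X_injective e)

lemma rename_swap_swap {n : ℕ} (i j : Fin n) (p : MvPolynomial (Fin n) ℤ) :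
    rename (Equiv.swap i j) (rename (Equiv.swap i j) p) = p := by
  rw [rename_rename]
  have : (⇑(Equiv.swap i j) ∘ ⇑(Equiv.swap i j)) = id := by
    ext x; simp
  rw [this]; simp

lemma symm_of_asc {n : ℕ} {S : Equiv.Perm (Fin n) → MvPolynomial (Fin n) ℤ} (hS : IsSchub S)
    (w : Equiv.Perm (Fin n)) (i j : Fin n) (hij : (i : ℕ) + 1 = j) (h : w i < w j) :
    rename (Equiv.swap i j) (S w) = S w := by
  have h1 := hS.2 w i j hij h
  have hne : i ≠ j := by rintro rfl; omega
  have h2 := congrArg (rename (Equiv.swap i j)) h1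
  rw [map_sub, rename_swap_swap, map_mul, map_sub, rename_X, rename_X, Equiv.swap_apply_left,
    Equiv.swap_apply_right] at h2
  apply mul_left_cancel₀ (X_sub_ne hne)
  linear_combination -h2 - h1

/-- unified divided difference: for a descent -/
lemma dd_desc {n : ℕ} {S : Equiv.Perm (Fin n) → MvPolynomial (Fin n) ℤ} (hS : IsSchub S)
    (u : Equiv.Perm (Fin n)) (i j : Fin n) (hij : (i : ℕ) + 1 = j) (h : u j < u i) :
    S u - rename (Equiv.swap i j) (S u) = (X i - X j) * S (u * Equiv.swap i j) := by
  have := hS.2 (u * Equiv.swap i j) i j hij (by simpa using h)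
  rw [this, mul_assoc, Equiv.swap_mul_self, mul_one]

lemma cov_step {n : ℕ} (w : Equiv.Perm (Fin n)) (i k l : Fin n) (hkl : (k : ℕ) + 1 = l)
    (hik : i < k) (hw : w k < w l) (j : Fin n) :
    Equiv.swap k l j ∈ cov w i ↔ j ∈ cov (w * Equiv.swap k l) i ∧
      (w * Equiv.swap k l * Equiv.swap i j) l < (w * Equiv.swap k l * Equiv.swap i j) k := by
  have hklt : k < l := by rw [Fin.lt_def]; omega
  have hil : i < l := hik.trans hklt
  have hvi : (w * Equiv.swap k l) i = w i := by
    rw [Equiv.Perm.mul_apply, Equiv.swap_apply_of_ne_of_ne hik.ne hil.ne]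
  have hvk : (w * Equiv.swap k l) k = w l := by simp
  have hvl : (w * Equiv.swap k l) l = w k := by simp
  have hvof : ∀ j : Fin n, j ≠ k → j ≠ l → (w * Equiv.swap k l) j = w j := by
    intro j h1 h2
    rw [Equiv.Perm.mul_apply, Equiv.swap_apply_of_ne_of_ne h1 h2]
  have hbt : ∀ m : Fin n, m < l → m ≠ k → m < k := by
    intro m h1 h2
    have : (m : ℕ) ≠ k := fun e => h2 (Fin.ext e)
    rw [Fin.lt_def] at *; omega
  have hbt2 : ∀ m : Fin n, k < m → m ≠ l → l < m := by
    intro m h1 h2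
    have : (m : ℕ) ≠ l := fun e => h2 (Fin.ext e)
    rw [Fin.lt_def] at *; omega
  rw [mem_cov, mem_cov, Equiv.Perm.mul_apply (w * Equiv.swap k l), 
    Equiv.Perm.mul_apply (w * Equiv.swap k l)]
  generalize hv : w * Equiv.swap k l = v at *
  rcases eq_or_ne j k with rfl | hjk
  · rw [Equiv.swap_apply_left, Equiv.swap_apply_right, Equiv.swap_apply_of_ne_of_ne hil.ne' hklt.ne',
      hvi, hvl, hvk]
    constructor
    · rintro ⟨h1, h2, h3⟩
      have h4 : w j < w i := by
        have := h3 j hik hklt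
        have hne : w j ≠ w i := fun e => hik.ne' (w.injective e)
        grind
      refine ⟨⟨hik, h2, fun m hm1 hm2 => ?_⟩, h4⟩
      rw [hvof m hm2.ne (hm2.trans hklt).ne]
      exact h3 m hm1 (hm2.trans hklt)
    · rintro ⟨⟨h1, h2, h3⟩, h4⟩
      refine ⟨hil, h2, fun m hm1 hm2 => ?_⟩
      rcases eq_or_ne m j with rfl | hmj
      · exact fun hh => absurd hh.1 (not_lt.2 h4.le)
      · have := h3 m hm1 (hbt m hm2 hmj)
        rwa [hvof m hmj hm2.ne] at this
  rcases eq_or_ne j l with rfl | hjl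
  · rw [Equiv.swap_apply_right, Equiv.swap_apply_right, Equiv.swap_apply_of_ne_of_ne hik.ne' hklt.ne,
      hvi, hvl, hvk]
    constructor
    · rintro ⟨h1, h2, h3⟩
      refine ⟨⟨hil, h2, fun m hm1 hm2 => ?_⟩, h2.trans hw⟩
      rcases eq_or_ne m k with rfl | hmk
      · rw [hvk]; exact fun hh => absurd hh.2 (not_lt.2 hw.le)
      · rw [hvof m hmk hm2.ne]; exact h3 m hm1 (hbt m hm2 hmk)
    · rintro ⟨⟨h1, h2, h3⟩, h4⟩
      refine ⟨hik, h2, fun m hm1 hm2 => ?_⟩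
      have := h3 m hm1 (hm2.trans hklt)
      rwa [hvof m hm2.ne (hm2.trans hklt).ne] at this
  · rw [Equiv.swap_apply_of_ne_of_ne hjk hjl, Equiv.swap_apply_of_ne_of_ne hil.ne' (Ne.symm hjl),
      Equiv.swap_apply_of_ne_of_ne hik.ne' (Ne.symm hjk), hvi, hvl, hvk, hvof j hjk hjl]
    simp only [hw, and_true]
    refine and_congr_right fun h1 => and_congr_right fun h2 => ?_
    constructor
    · intro h3 m hm1 hm2
      rcases eq_or_ne m k with rfl | hmk
      · rw [hvk]; exact h3 l hil (hbt2 j hm2 hjl)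
      rcases eq_or_ne m l with rfl | hml
      · rw [hvl]; exact h3 k hik (hklt.trans hm2)
      · rw [hvof m hmk hml]; exact h3 m hm1 hm2
    · intro h3 m hm1 hm2
      rcases eq_or_ne m k with rfl | hmk
      · have := h3 l hil (hbt2 j hm2 hjl); rwa [hvl] at this
      rcases eq_or_ne m l with rfl | hml
      · have := h3 k hik (hklt.trans hm2); rwa [hvk] at this
      · have := h3 m hm1 hm2; rwa [hvof m hmk hml] at this

theorem cotrans {n : ℕ} {S : Equiv.Perm (Fin n) → MvPolynomial (Fin n) ℤ} (hS : IsSchub S) :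
    ∀ (N : ℕ) (w : Equiv.Perm (Fin n)) (i : Fin n), Phi w = N → Good w i →
      X i * S w = ∑ j ∈ cov w i, S (w * Equiv.swap i j) := by
  intro N
  induction N using Nat.strong_induction_on with
  | _ N ih =>
  intro w i hN hg
  by_cases hasc : ∃ k l : Fin n, (k : ℕ) + 1 = l ∧ i < k ∧ w k < w l
  · obtain ⟨k, l, hkl, hik, hw⟩ := hasc
    have hklt : k < l := by rw [Fin.lt_def]; omega
    have hil : i < l := hik.trans hklt
    have hvi : (w * Equiv.swap k l) i = w i := by
      rw [Equiv.Perm.mul_apply, Equiv.swap_apply_of_ne_of_ne hik.ne hil.ne]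
    have hgv : Good (w * Equiv.swap k l) i := by
      refine ⟨?_, ?_⟩
      · intro r hr s hrs
        rw [Equiv.Perm.mul_apply, Equiv.Perm.mul_apply,
          Equiv.swap_apply_of_ne_of_ne (hr.trans hik).ne (hr.trans hil).ne]
        apply hg.1 r hr
        rcases eq_or_ne s k with rfl | h1
        · rw [Equiv.swap_apply_left]; exact hr.trans hil
        rcases eq_or_ne s l with rfl | h2
        · rw [Equiv.swap_apply_right]; exact hr.trans hik
        rwa [Equiv.swap_apply_of_ne_of_ne h1 h2]
      · obtain ⟨s, hs, hws⟩ := hg.2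
        refine ⟨Equiv.swap k l s, ?_, ?_⟩
        · rcases eq_or_ne s k with rfl | h1
          · rw [Equiv.swap_apply_left]; exact hil
          rcases eq_or_ne s l with rfl | h2
          · rw [Equiv.swap_apply_right]; exact hik
          rwa [Equiv.swap_apply_of_ne_of_ne h1 h2]
        · rw [hvi]; simpa using hws
    have h1 := ih _ (hN ▸ Phi_lt w k l hklt hw) _ i rfl hgv
    have h2 := congrArg (rename (Equiv.swap k l)) h1
    rw [map_mul, rename_X, Equiv.swap_apply_of_ne_of_ne hik.ne hil.ne, map_sum] at h2
    have h3 := hS.2 w k l hkl hw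
    apply mul_left_cancel₀ (X_sub_ne hklt.ne)
    have h4 : (X k - X l) * (X i * S w) = ∑ j ∈ cov (w * Equiv.swap k l) i,
        (S (w * Equiv.swap k l * Equiv.swap i j)
          - rename (Equiv.swap k l) (S (w * Equiv.swap k l * Equiv.swap i j))) := by
      rw [Finset.sum_sub_distrib, ← h1, ← h2, ← mul_sub, ← h3]; ring
    rw [h4, Finset.mul_sum]
    symm
    apply Finset.sum_of_injOn (Equiv.swap k l) (Equiv.injective _).injOn
    · intro j hj
      have := (cov_step w i k l hkl hik hw (Equiv.swap k l j)).1 (by simpa using hj)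
      exact this.1
    · intro j hj hj'
      have hnd : ¬ ((w * Equiv.swap k l * Equiv.swap i j) l <
          (w * Equiv.swap k l * Equiv.swap i j) k) := by
        intro hc
        apply hj'
        exact ⟨Equiv.swap k l j, (cov_step w i k l hkl hik hw j).2 ⟨hj, hc⟩, by simp⟩
      have hlt := lt_of_le_of_ne (not_lt.1 hnd) (fun e => hklt.ne (Equiv.injective _ e))
      rw [symm_of_asc hS _ k l hkl hlt, sub_self]
    · intro j hj
      have := (cov_step w i k l hkl hik hw (Equiv.swap k l j)).1 (by simpa using hj)
      rw [dd_desc hS _ k l hkl this.2]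
      congr 2
      have hc : Equiv.swap i (Equiv.swap k l j) =
          Equiv.swap k l * Equiv.swap i j * Equiv.swap k l := by
        have := Equiv.swap_apply_apply (Equiv.swap k l) i j
        rw [Equiv.swap_apply_of_ne_of_ne hik.ne hil.ne, Equiv.swap_inv] at this
        exact this
      rw [hc]
      simp only [mul_assoc, Equiv.swap_mul_self, mul_one]
      simp only [← mul_assoc, Equiv.swap_mul_self, mul_one]
  · push Not at hasc
    -- `w` is decreasing after `i`
    have hdec : ∀ r s : Fin n, i < r → r < s → w s < w r := by
      have key : ∀ (d : ℕ) (r s : Fin n), i < r → (r : ℕ) + d + 1 = s → w s < w r := by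
        intro d
        induction d with
        | zero =>
          intro r s hir hrs
          have := hasc r s (by omega) hir
          exact lt_of_le_of_ne this (fun e => by
            have := w.injective e; subst this; omega)
        | succ d ihd =>
          intro r s hir hrs
          have h1 := ihd r ⟨r + d + 1, by omega⟩ hir rfl
          have h2 := hasc ⟨r + d + 1, by omega⟩ s (by simp; omega) (by
            rw [Fin.lt_def] at *; simp; omega)
          exact lt_of_le_of_lt h2 h1
      intro r s hir hrs
      rw [Fin.lt_def] at hrs
      exact key (s - r - 1) r s hir (by omega)
    obtain ⟨s, his, hws⟩ := hg.2
    have hin : (i : ℕ) + 1 < n := by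
      have := s.2; rw [Fin.lt_def] at his; omega
    obtain ⟨l, hl⟩ : ∃ l : Fin n, l = ⟨i + 1, hin⟩ := ⟨_, rfl⟩
    have hil' : (i : ℕ) + 1 = l := by rw [hl]
    have hil : i < l := by rw [Fin.lt_def]; omega
    have hwil : w i < w l := by
      rcases eq_or_ne s l with rfl | hsl
      · exact hws
      · exact hws.trans (hdec l s hil (by
          rw [Fin.lt_def] at *
          have : (s : ℕ) ≠ l := fun e => hsl (Fin.ext e)
          omega))
    have hlt : ∀ j : Fin n, i < j → j ≠ l → l < j := by
      intro j h1 h2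
      rw [Fin.lt_def] at *
      have : (j : ℕ) ≠ l := fun e => h2 (Fin.ext e)
      omega
    have hvof : ∀ j : Fin n, j ≠ i → j ≠ l → (w * Equiv.swap i l) j = w j := by
      intro j h1 h2
      rw [Equiv.Perm.mul_apply, Equiv.swap_apply_of_ne_of_ne h1 h2]
    have hvi : (w * Equiv.swap i l) i = w l := by simp
    have hvl : (w * Equiv.swap i l) l = w i := by simp
    have h3 := hS.2 w i l hil' hwil
    have hlcov : l ∈ cov w i := by
      rw [mem_cov]
      refine ⟨hil, hwil, fun k h1 h2 => ?_⟩
      rw [Fin.lt_def] at h1 h2; omega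
    have hpre : ∀ r, r < l → ∀ s, r < s → (w * Equiv.swap i l) s < (w * Equiv.swap i l) r := by
      intro r hr s hrs
      rcases eq_or_ne r i with rfl | hri
      · rw [hvi]
        rcases eq_or_ne s l with rfl | hsl
        · rwa [hvl]
        · rw [hvof s hrs.ne' hsl]; exact hdec _ _ hil (hlt s hrs hsl)
      · have hri' : r < i := by
          rw [Fin.lt_def] at *
          have : (r : ℕ) ≠ i := fun e => hri (Fin.ext e)
          omega
        rw [hvof r hri hr.ne]
        apply hg.1 r hri'
        rcases eq_or_ne s i with rfl | h1
        · rw [Equiv.swap_apply_left]; exact hr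
        rcases eq_or_ne s l with rfl | h2
        · rw [Equiv.swap_apply_right]; exact hri'
        rwa [Equiv.swap_apply_of_ne_of_ne h1 h2]
    by_cases hex : ∃ s, l < s ∧ w i < w s
    · have hgv : Good (w * Equiv.swap i l) l := by
        refine ⟨hpre, ?_⟩
        obtain ⟨s, h1, h2⟩ := hex
        exact ⟨s, h1, by rwa [hvl, hvof s (hil.trans h1).ne' h1.ne']⟩
      have h1 := ih _ (hN ▸ Phi_lt w i l hil hwil) _ l rfl hgv
      have h2 := congrArg (rename (Equiv.swap i l)) h1
      rw [map_mul, rename_X, Equiv.swap_apply_right, map_sum] at h2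
      have hcov : cov w i = insert l (cov (w * Equiv.swap i l) l) := by
        ext j
        rw [mem_insert, mem_cov, mem_cov, hvl]
        constructor
        · rintro ⟨ha, hb, hc⟩
          by_cases hjl : j = l
          · exact Or.inl hjl
          · have hlj := hlt j ha hjl
            refine Or.inr ⟨hlj, by rwa [hvof j ha.ne' hjl], fun k hk1 hk2 => ?_⟩
            rw [hvof j ha.ne' hjl, hvof k (hil.trans hk1).ne' hk1.ne']
            exact hc k (hil.trans hk1) hk2
        · rintro (rfl | ⟨ha, hb, hc⟩)
          · exact mem_cov.1 hlcov
          · rw [hvof j (hil.trans ha).ne' ha.ne'] at hb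
            refine ⟨hil.trans ha, hb, fun k hk1 hk2 => ?_⟩
            by_cases hkl : k = l
            · subst hkl
              exact fun hh => absurd (hdec k j hil ha) (not_lt.2 hh.2.le)
            · have := hc k (hlt k hk1 hkl) hk2
              rwa [hvof j (hil.trans ha).ne' ha.ne', hvof k hk1.ne' hkl] at this
      have hnot : l ∉ cov (w * Equiv.swap i l) l := by
        rw [mem_cov]; exact fun h => lt_irrefl _ h.1
      rw [hcov, sum_insert hnot]
      apply mul_left_cancel₀ (X_sub_ne hil.ne)
      have h4 : (X i - X l) * (X i * S w) = (X i - X l) * S (w * Equiv.swap i l) +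
        ∑ j ∈ cov (w * Equiv.swap i l) l,
        (S (w * Equiv.swap i l * Equiv.swap l j)
          - rename (Equiv.swap i l) (S (w * Equiv.swap i l * Equiv.swap l j))) := by
        rw [Finset.sum_sub_distrib, ← h1, ← h2]
        linear_combination (X i) * h3
      rw [h4, mul_add, Finset.mul_sum]
      congr 1
      apply Finset.sum_congr rfl
      intro j hj
      rw [mem_cov] at hj
      have hij := hil.trans hj.1
      rw [dd_desc hS _ i l hil']
      · congr 2
        have hc := Equiv.swap_apply_apply (Equiv.swap i l) i j
        have hc : Equiv.swap i j =
          Equiv.swap i l * Equiv.swap l j * Equiv.swap i l := by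
          have := Equiv.swap_apply_apply (Equiv.swap i l) l j
          rw [Equiv.swap_apply_of_ne_of_ne hij.ne' hj.1.ne', Equiv.swap_inv,
            Equiv.swap_apply_right] at this
          exact this
        rw [hc]; simp only [mul_assoc]
      · rw [Equiv.Perm.mul_apply, Equiv.Perm.mul_apply _ _ i, Equiv.swap_apply_left,
          Equiv.swap_apply_of_ne_of_ne hil.ne hij.ne]
        exact hpre i hil j hij
    · push Not at hex
      have hrev : w * Equiv.swap i l = Fin.revPerm := by
        apply eq_rev
        intro r s hrs
        by_cases hrl : r < l
        · exact hpre r hrl s hrs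
        · have hsl : l < s := lt_of_le_of_lt (not_lt.1 hrl) hrs
          rw [hvof s (hil.trans hsl).ne' hsl.ne']
          by_cases hrl' : r = l
          · subst hrl'
            rw [hvl]
            exact lt_of_le_of_ne (hex s hsl) (fun e => (hil.trans hsl).ne' (w.injective e))
          · have hlr : l < r := lt_of_le_of_ne (not_lt.1 hrl) (Ne.symm hrl')
            rw [hvof r (hil.trans hlr).ne' hlr.ne']
            exact hdec _ _ (hil.trans hlr) hrs
      have hcov : cov w i = {l} := by
        ext j
        rw [mem_singleton]
        refine ⟨fun hj => ?_, fun e => e ▸ hlcov⟩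
        rw [mem_cov] at hj
        by_contra hjl
        exact absurd hj.2.1 (not_lt.2 (hex j (hlt j hj.1 hjl)))
      rw [hcov, sum_singleton, hrev, hS.1]
      rw [hrev, hS.1] at h3
      have hli : l ∈ (univ : Finset (Fin n)).erase i := by simp [hil.ne']
      obtain ⟨M, hM⟩ : ∃ M : MvPolynomial (Fin n) ℤ, M = X i ^ (n - 1 - (l : ℕ)) * (X l ^ (n - 1 - (l : ℕ)) *
        ∏ r ∈ (univ.erase i).erase l, X r ^ (n - 1 - (r : ℕ))) := ⟨_, rfl⟩
      have hprod : (∏ r : Fin n, X r ^ (n - 1 - (r : ℕ)) : MvPolynomial (Fin n) ℤ) = X i * M := by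
        rw [← Finset.mul_prod_erase univ _ (mem_univ i), ← Finset.mul_prod_erase _ _ hli, hM]
        have : n - 1 - (i : ℕ) = (n - 1 - (l : ℕ)) + 1 := by omega
        rw [this, pow_succ]; ring
      have hMs : rename (Equiv.swap i l) M = M := by
        rw [hM]
        simp only [map_mul, map_pow, map_prod, rename_X, Equiv.swap_apply_left,
          Equiv.swap_apply_right]
        have : ∏ r ∈ (univ.erase i).erase l, (X (Equiv.swap i l r) : MvPolynomial (Fin n) ℤ) ^ (n - 1 - (r : ℕ)) =
           ∏ r ∈ (univ.erase i).erase l, X r ^ (n - 1 - (r : ℕ)) := by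
          apply Finset.prod_congr rfl
          intro r hr
          simp only [mem_erase, mem_univ, and_true] at hr
          rw [Equiv.swap_apply_of_ne_of_ne hr.2 hr.1]
        rw [this]; ring
      rw [hprod, map_mul, rename_X, Equiv.swap_apply_left, hMs, ← sub_mul] at h3
      rw [hprod, mul_left_cancel₀ (X_sub_ne hil.ne) h3]

/-- Rothe diagram of `w`, column `c`, row `r`. -/
def dg {n : ℕ} (w : Equiv.Perm (Fin n)) (c r : Fin n) : ℤ :=
  if r < w.symm c ∧ c < w r then 1 else 0

/-- Prefix sums of a column. -/
def pre {n : ℕ} (v : Fin n → ℤ) (t : ℕ) : ℤ := ∑ r, if r.val < t then v r else 0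

lemma pre_succ {n : ℕ} (v : Fin n → ℤ) (i : Fin n) : pre v (i + 1) = pre v i + v i := by
  unfold pre
  have : v i = ∑ r, if r = i then v r else 0 := by simp
  rw [this, ← Finset.sum_add_distrib]
  apply Finset.sum_congr rfl
  intro r _
  have h : r = i ↔ r.val = i.val := Fin.ext_iff
  simp only [h]
  split_ifs <;> first | (exfalso; omega) | simp

lemma pre_zero {n : ℕ} (v : Fin n → ℤ) : pre v 0 = 0 := by simp [pre]

lemma pre_full {n : ℕ} (v : Fin n → ℤ) : pre v n = ∑ r, v r := by simp [pre]

lemma pre_congr {n : ℕ} (v v' : Fin n → ℤ) (t : ℕ) (h : ∀ r : Fin n, r.val < t → v r = v' r) :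
    pre v t = pre v' t := by
  unfold pre
  apply Finset.sum_congr rfl
  intro r _
  split_ifs with hr
  · exact h r hr
  · rfl

lemma pre_le {n : ℕ} (v v' : Fin n → ℤ) (t : ℕ) (h : ∀ r : Fin n, r.val < t → v r ≤ v' r) :
    pre v t ≤ pre v' t := by
  unfold pre
  apply Finset.sum_le_sum
  intro r _
  split_ifs with hr
  · exact h r hr
  · rfl

lemma pre_le_sum {n : ℕ} (v : Fin n → ℤ) (t : ℕ) (h : ∀ r, 0 ≤ v r) :
    pre v t ≤ ∑ r, v r := by
  unfold pre
  apply Finset.sum_le_sum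
  intro r _
  split_ifs
  · rfl
  · exact h r

lemma pre_eq_sum {n : ℕ} (v : Fin n → ℤ) (t : ℕ) (h : ∀ r : Fin n, t ≤ r.val → v r = 0) :
    pre v t = ∑ r, v r := by
  unfold pre
  apply Finset.sum_congr rfl
  intro r _
  split_ifs with hr
  · rfl
  · exact (h r (not_lt.1 hr)).symm

lemma pre_add {n : ℕ} (v v' : Fin n → ℤ) (t : ℕ) :
    pre (fun r => v r + v' r) t = pre v t + pre v' t := by
  unfold pre
  rw [← Finset.sum_add_distrib]
  apply Finset.sum_congr rfl
  intro r _
  split_ifs <;> simp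

lemma pre_single {n : ℕ} (i : Fin n) (t : ℕ) :
    pre (fun r => if r = i then 1 else 0) t = if i.val < t then 1 else 0 := by
  unfold pre
  rw [Finset.sum_eq_single i]
  · simp
  · intro b _ hb; simp [hb]
  · simp

/-- Column dominance (Gale order). -/
def Dom1 {n : ℕ} (d v : Fin n → ℤ) : Prop :=
  (∀ r, 0 ≤ v r ∧ v r ≤ 1) ∧ (∀ t, pre d t ≤ pre v t) ∧ ∑ r, v r = ∑ r, d r

def Dom {n : ℕ} (w : Equiv.Perm (Fin n)) (x : Fin n → Fin n → ℤ) : Prop :=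
  ∀ c, Dom1 (dg w c) (x c)

def mix {n : ℕ} (t : ℕ) (a b : Fin n → ℤ) : Fin n → ℤ := fun r => if r.val < t then a r else b r

lemma pre_mix_le {n : ℕ} (t : ℕ) (a b : Fin n → ℤ) (u : ℕ) (h : u ≤ t) :
    pre (mix t a b) u = pre a u := by
  apply pre_congr
  intro r hr
  simp only [mix]
  rw [if_pos (by omega)]

lemma pre_mix_ge {n : ℕ} (t : ℕ) (a b : Fin n → ℤ) (u : ℕ) (h : t ≤ u) :
    pre (mix t a b) u = pre a t - pre b t + pre b u := by
  unfold pre mix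
  rw [← Finset.sum_sub_distrib, ← Finset.sum_add_distrib]
  apply Finset.sum_congr rfl
  intro r _
  split_ifs <;> first | (exfalso; omega) | simp

lemma sum_mix {n : ℕ} (t : ℕ) (a b : Fin n → ℤ) :
    ∑ r, mix t a b r = pre a t - pre b t + ∑ r, b r := by
  unfold pre mix
  rw [← Finset.sum_sub_distrib, ← Finset.sum_add_distrib]
  apply Finset.sum_congr rfl
  intro r _
  split_ifs <;> simp

lemma dom_mix {n : ℕ} {d1 d2 v1 v2 : Fin n → ℤ} (h1 : Dom1 d1 v1) (h2 : Dom1 d2 v2) (q t : ℕ)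
    (hd : ∀ r : Fin n, r.val < q → d1 r = d2 r) (htq : t ≤ q) (ht : pre v1 t = pre v2 t) :
    Dom1 d1 (mix t v2 v1) := by
  refine ⟨?_, ?_, ?_⟩
  · intro r
    unfold mix
    split_ifs
    · exact h2.1 r
    · exact h1.1 r
  · intro u
    rcases le_total u t with hu | hu
    · rw [pre_mix_le _ _ _ _ hu, pre_congr d1 d2 u (fun r hr => hd r (by omega))]
      exact h2.2.1 u
    · rw [pre_mix_ge _ _ _ _ hu, ht]
      have := h1.2.1 u
      linarith
  · rw [sum_mix, ht, ← h1.2.2]; ring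

lemma ivt {n : ℕ} {v1 v2 : Fin n → ℤ} (i : Fin n) (q : ℕ) (hq : q ≤ n)
    (h1 : ∀ r, 0 ≤ v1 r ∧ v1 r ≤ 1) (h2 : ∀ r, 0 ≤ v2 r ∧ v2 r ≤ 1)
    (hi : pre v2 i ≤ pre v1 i) (hi1 : v1 i = 1) (hi2 : v2 i = 0)
    (hne : ∀ t, (i : ℕ) < t → t ≤ q → pre v1 t ≠ pre v2 t) :
    ∀ t, (i : ℕ) + 1 ≤ t → t ≤ q → pre v2 t + 1 ≤ pre v1 t := by
  intro t ht
  induction t, ht using Nat.le_induction with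
  | base =>
    intro _
    rw [pre_succ, pre_succ, hi1, hi2]; omega
  | succ t ht ih =>
    intro htq
    have := ih (by omega)
    have hn := hne (t + 1) (by omega) htq
    have e1 := pre_succ v1 ⟨t, by omega⟩
    have e2 := pre_succ v2 ⟨t, by omega⟩
    simp only at e1 e2
    have := h1 ⟨t, by omega⟩
    have := h2 ⟨t, by omega⟩
    omega

lemma dg_pre {n : ℕ} {w : Equiv.Perm (Fin n)} {i : Fin n} (hg : Good w i) (c : Fin n)
    (hc : i ≤ w.symm c) (r : Fin n) (hr : r < i) : dg w c r = 1 := by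
  unfold dg
  have := hg.1 r hr (w.symm c) (lt_of_lt_of_le hr hc)
  rw [Equiv.apply_symm_apply] at this
  rw [if_pos ⟨lt_of_lt_of_le hr hc, this⟩]

/-- rows before `i` are filled as much as possible -/
lemma dom_pre {n : ℕ} {w : Equiv.Perm (Fin n)} {i : Fin n} (hg : Good w i) (c : Fin n)
    (hc : i ≤ w.symm c) {v v' : Fin n → ℤ} (hv : Dom1 (dg w c) v)
    (hv' : ∀ r, 0 ≤ v' r ∧ v' r ≤ 1) : pre v' i ≤ pre v i := by
  refine le_trans (pre_le v' (dg w c) i fun r hr => ?_) (hv.2.1 i)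
  rw [dg_pre hg c hc r hr]
  exact (hv' r).2

lemma dg_a {n : ℕ} {w : Equiv.Perm (Fin n)} {i j : Fin n} (hg : Good w i)
    (hj : j ∈ cov w i) (r : Fin n) :
    dg (w * Equiv.swap i j) (w i) r = dg w (w j) r + if r = i then 1 else 0 := by
  rw [mem_cov] at hj
  obtain ⟨h1, h2, h3⟩ := hj
  have e : (w * Equiv.swap i j).symm (w i) = j := by
    rw [Equiv.symm_apply_eq]; simp
  unfold dg
  rw [e, Equiv.symm_apply_apply]
  rcases eq_or_ne r i with rfl | hri
  · simp [h1, h2, h2.le]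
  rcases eq_or_ne r j with rfl | hrj
  · simp [hri]
  have hr : (w * Equiv.swap i j) r = w r := by
    rw [Equiv.Perm.mul_apply, Equiv.swap_apply_of_ne_of_ne hri hrj]
  rw [hr]
  simp only [hri, if_false, add_zero]
  have ha := hg.1 r
  have hb := h3 r
  have hc : w r ≠ w j := fun e => hrj (w.injective e)
  congr 1
  grind

lemma dg_b {n : ℕ} {w : Equiv.Perm (Fin n)} {i j : Fin n} (hg : Good w i)
    (hj : j ∈ cov w i) (r : Fin n) : dg (w * Equiv.swap i j) (w j) r = dg w (w i) r := by
  rw [mem_cov] at hj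
  obtain ⟨h1, h2, h3⟩ := hj
  have e : (w * Equiv.swap i j).symm (w j) = i := by
    rw [Equiv.symm_apply_eq]; simp
  unfold dg
  rw [e, Equiv.symm_apply_apply]
  by_cases hri : r < i
  · have hr : (w * Equiv.swap i j) r = w r := by
      rw [Equiv.Perm.mul_apply, Equiv.swap_apply_of_ne_of_ne hri.ne (hri.trans h1).ne]
    rw [hr]
    simp [hri, hg.1 r hri j (hri.trans h1), hg.1 r hri i hri]
  · simp [hri]

lemma dg_c {n : ℕ} {w : Equiv.Perm (Fin n)} {i j : Fin n} (hj : j ∈ cov w i)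
    (c : Fin n) (hca : c ≠ w i) (hcb : c ≠ w j) (r : Fin n) :
    dg (w * Equiv.swap i j) c r = dg w c r +
      if (w i < c ∧ c < w j ∧ j < w.symm c) then
        ((if r = i then 1 else 0) - (if r = j then 1 else 0)) else 0 := by
  rw [mem_cov] at hj
  obtain ⟨h1, h2, h3⟩ := hj
  obtain ⟨s, rfl⟩ := w.surjective c
  have hsi : s ≠ i := fun e => hca (by rw [e])
  have hsj : s ≠ j := fun e => hcb (by rw [e])
  have e : (w * Equiv.swap i j).symm (w s) = s := by
    rw [Equiv.symm_apply_eq, Equiv.Perm.mul_apply, Equiv.swap_apply_of_ne_of_ne hsi hsj]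
  unfold dg
  rw [e, Equiv.symm_apply_apply]
  have hs := h3 s
  rcases eq_or_ne r i with rfl | hri
  · rw [Equiv.Perm.mul_apply, Equiv.swap_apply_left]
    have := h1.ne
    grind
  rcases eq_or_ne r j with rfl | hrj
  · rw [Equiv.Perm.mul_apply, Equiv.swap_apply_right]
    grind
  rw [Equiv.Perm.mul_apply, Equiv.swap_apply_of_ne_of_ne hri hrj]
  simp [hri, hrj]


lemma exch {n : ℕ} {w : Equiv.Perm (Fin n)} {x : Fin n → Fin n → ℤ} (hx : Dom w x)
    (c1 c2 : Fin n) (q t : ℕ)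
    (hd : ∀ r : Fin n, r.val < q → dg w c1 r = dg w c2 r) (htq : t ≤ q)
    (ht : pre (x c1) t = pre (x c2) t) :
    Dom w (fun c => mix t (x (Equiv.swap c1 c2 c)) (x c)) := by
  intro c
  simp only
  rcases eq_or_ne c c1 with rfl | h1
  · rw [Equiv.swap_apply_left]
    exact dom_mix (hx _) (hx _) q t hd htq ht
  rcases eq_or_ne c c2 with rfl | h2
  · rw [Equiv.swap_apply_right]
    exact dom_mix (hx _) (hx _) q t (fun r hr => (hd r hr).symm) htq ht.symm
  rw [Equiv.swap_apply_of_ne_of_ne h1 h2]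
  have : mix t (x c) (x c) = x c := by
    ext r; simp [mix]
  rw [this]; exact hx c

lemma exch_sum {n : ℕ} (x : Fin n → Fin n → ℤ) (c1 c2 : Fin n) (t : ℕ) (r : Fin n) :
    ∑ c, mix t (x (Equiv.swap c1 c2 c)) (x c) r = ∑ c, x c r := by
  unfold mix
  split_ifs
  · exact Equiv.sum_comp (Equiv.swap c1 c2) (fun c => x c r)
  · rfl

lemma fwd {n : ℕ} {w : Equiv.Perm (Fin n)} {i : Fin n} (hg : Good w i) :
    ∀ (N : ℕ) (b : Fin n) (x : Fin n → Fin n → ℤ), b.val = N → Dom w x → w i < b →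
      i < w.symm b → x b i = 0 →
      ∃ j ∈ cov w i, ∃ x', Dom (w * Equiv.swap i j) x' ∧
        ∀ r, ∑ c, x' c r = ∑ c, x c r + if r = i then 1 else 0 := by
  intro N
  induction N using Nat.strong_induction_on with
  | _ N ih =>
  intro b x hN hx hab hib hxb
  have ih' : ∀ (c : Fin n) (y : Fin n → Fin n → ℤ), c < b → Dom w y → w i < c →
      i < w.symm c → y c i = 0 → (∀ r, ∑ c, y c r = ∑ c, x c r) →
      ∃ j ∈ cov w i, ∃ x', Dom (w * Equiv.swap i j) x' ∧
        ∀ r, ∑ c, x' c r = ∑ c, x c r + if r = i then 1 else 0 := by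
    intro c y hc hy h1 h2 h3 h4
    obtain ⟨j, hj, x', hx', hs⟩ := ih c.val (by rw [← hN]; exact hc) c y rfl hy h1 h2 h3
    exact ⟨j, hj, x', hx', fun r => by rw [hs r, h4 r]⟩
  clear ih
  by_cases hall : ∃ c, w i < c ∧ c < b ∧ i < w.symm c ∧ x c i = 0
  · obtain ⟨c, h1, h2, h3, h4⟩ := hall
    exact ih' c x h2 hx h1 h3 h4 (fun _ => rfl)
  have hone : ∀ c, w i < c → c < b → i < w.symm c → x c i = 1 := by
    intro c h1 h2 h3
    have h4 : x c i ≠ 0 := fun h4 => hall ⟨c, h1, h2, h3, h4⟩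
    have := (hx c).1 i
    omega
  clear hall
  -- a successful exchange
  have hex : ∀ (c : Fin n) (q t : ℕ), w i < c → c < b → i < w.symm c →
      (∀ r : Fin n, r.val < q → dg w c r = dg w b r) → (i : ℕ) < t → t ≤ q →
      pre (x c) t = pre (x b) t →
      ∃ j ∈ cov w i, ∃ x', Dom (w * Equiv.swap i j) x' ∧
        ∀ r, ∑ c, x' c r = ∑ c, x c r + if r = i then 1 else 0 := by
    intro c q t h1 h2 h3 hd hit htq ht
    refine ih' c _ h2 (exch hx c b q t hd htq ht) h1 h3 ?_ (exch_sum x c b t)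
    simp only [Equiv.swap_apply_left, mix, hit, if_true, hxb]
  by_cases hmin : ∃ c, w i < c ∧ c < b ∧ i < w.symm c ∧ w.symm c < w.symm b
  · -- choose such a `c` in the first position
    have hne : (univ.filter fun s => i < s ∧ w i < w s ∧ w s < b ∧ s < w.symm b).Nonempty := by
      obtain ⟨c, h1, h2, h3, h4⟩ := hmin
      exact ⟨w.symm c, by simp [h1, h2, h3, h4]⟩
    obtain ⟨s, hs⟩ : ∃ s, s = Finset.min' _ hne := ⟨_, rfl⟩
    have hsm := Finset.min'_mem _ hne
    rw [← hs] at hsm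
    simp only [mem_filter, mem_univ, true_and] at hsm
    obtain ⟨his, hws, hsb, hspb⟩ := hsm
    have hfirst : ∀ r, i < r → r < s → ¬ (w i < w r ∧ w r < b) := by
      intro r h1 h2 h3
      have hmem : r ∈ univ.filter fun s => i < s ∧ w i < w s ∧ w s < b ∧ s < w.symm b := by
        simp [h1, h3.1, h3.2, h2.trans hspb]
      exact absurd h2 (not_lt.2 (hs ▸ Finset.min'_le _ r hmem))
    have hd : ∀ r : Fin n, r.val < s.val → dg w (w s) r = dg w b r := by
      intro r hr
      have hr' : r < s := hr
      unfold dg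
      rw [Equiv.symm_apply_apply]
      have h1 := hfirst r
      have h2 := hg.1 r
      have h3 := fun h => h2 h (w.symm b)
      rw [Equiv.apply_symm_apply] at h3
      have h4 : w r ≠ b := fun e => by
        have : r = w.symm b := by rw [← e]; simp
        exact absurd (hr'.trans hspb) (by rw [this]; exact lt_irrefl _)
      congr 1
      rcases lt_trichotomy r i with h | h | h
      · have := h2 h s (h.trans his)
        have := h3 h (h.trans hib)
        grind
      · subst h; grind
      · have := h1 h hr'
        grind
    by_cases hex2 : ∃ t, (i : ℕ) < t ∧ t ≤ s.val ∧ pre (x (w s)) t = pre (x b) t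
    · obtain ⟨t, h1, h2, h3⟩ := hex2
      exact hex (w s) s t hws hsb (by simpa using his) hd h1 h2 h3
    · exfalso
      have hiv := ivt i s.val s.2.le (hx (w s)).1 (hx b).1
        (dom_pre hg (w s) (by simpa using his.le) (hx (w s)) (hx b).1)
        (hone (w s) hws hsb (by simpa using his)) hxb
        (fun t h1 h2 h3 => hex2 ⟨t, h1, h2, h3⟩) s.val his le_rfl
      have e1 := (hx b).2.1 s.val
      have e2 := pre_congr _ _ s.val hd
      have e3 : pre (dg w (w s)) s.val = ∑ r, dg w (w s) r := by
        apply pre_eq_sum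
        intro r hr
        unfold dg
        rw [Equiv.symm_apply_apply, if_neg]
        exact fun h => absurd h.1 (not_lt.2 hr)
      have e4 := pre_le_sum (x (w s)) s.val (fun r => ((hx (w s)).1 r).1)
      have e5 := (hx (w s)).2.2
      omega
  · push Not at hmin
    obtain ⟨j, rfl⟩ := w.surjective b
    rw [Equiv.symm_apply_apply] at hib
    have hj : j ∈ cov w i := by
      rw [mem_cov]
      refine ⟨hib, hab, fun k h1 h2 h3 => ?_⟩
      have := hmin (w k) h3.1 h3.2 (by simpa using h1)
      simp only [Equiv.symm_apply_apply] at this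
      exact absurd h2 (not_lt.2 this)
    by_cases hex2 : ∃ (c : Fin n) (t : ℕ), w i < c ∧ c < w j ∧ j < w.symm c ∧ (i : ℕ) < t ∧
        t ≤ j.val ∧ pre (x c) t = pre (x (w j)) t
    · obtain ⟨c, t, h1, h2, h3, h4, h5, h6⟩ := hex2
      refine hex c j t h1 h2 (hib.trans h3) ?_ h4 h5 h6
      intro r hr
      have hr' : r < j := hr
      have hcov := mem_cov.1 hj
      unfold dg
      rw [Equiv.symm_apply_apply]
      have k1 := hcov.2.2 r
      have k2 := hg.1 r
      have k3 := fun h => k2 h (w.symm c)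
      rw [Equiv.apply_symm_apply] at k3
      have k4 : w r ≠ w j := fun e => hr'.ne (w.injective e)
      congr 1
      rcases lt_trichotomy r i with h | h | h
      · have := k2 h j (h.trans hib)
        have := k3 h (h.trans (hib.trans h3))
        grind
      · subst h; grind
      · have := k1 h hr'
        grind
    · refine ⟨j, hj, fun c r => x (Equiv.swap (w i) (w j) c) r +
        if c = w i then (if r = i then 1 else 0) else 0, ?_, ?_⟩
      · intro c
        rcases eq_or_ne c (w i) with rfl | hca
        · have e : dg (w * Equiv.swap i j) (w i) =
              fun r => dg w (w j) r + if r = i then 1 else 0 := funext (dg_a hg hj)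
          rw [e]
          simp only [Equiv.swap_apply_left, if_true]
          refine ⟨?_, ?_, ?_⟩
          · intro r
            have := (hx (w j)).1 r
            beta_reduce
            split_ifs with hr
            · subst hr; omega
            · omega
          · intro t
            rw [pre_add, pre_add]
            have := (hx (w j)).2.1 t
            omega
          · rw [Finset.sum_add_distrib, Finset.sum_add_distrib, (hx (w j)).2.2]
        rcases eq_or_ne c (w j) with rfl | hcb
        · have e : dg (w * Equiv.swap i j) (w j) = dg w (w i) := funext (dg_b hg hj)
          rw [e]
          simp only [Equiv.swap_apply_right, hca, if_false, add_zero]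
          exact hx (w i)
        simp only [Equiv.swap_apply_of_ne_of_ne hca hcb, hca, if_false, add_zero]
        change Dom1 _ (x c)
        by_cases hc : w i < c ∧ c < w j ∧ j < w.symm c
        · have e : dg (w * Equiv.swap i j) c = fun r => dg w c r +
              ((if r = i then 1 else 0) + (if r = j then -1 else 0)) := by
            ext r
            rw [dg_c hj c hca hcb, if_pos hc]
            split_ifs <;> simp
          have hneg : ∀ t, pre (fun r : Fin n => if r = j then (-1 : ℤ) else 0) t =
              if j.val < t then -1 else 0 := by
            intro t
            unfold pre
            rw [Finset.sum_eq_single j]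
            · simp
            · intro b _ hb; simp [hb]
            · simp
          rw [e]
          refine ⟨(hx c).1, ?_, ?_⟩
          · intro t
            rw [pre_add, pre_add, pre_single, hneg]
            have h1 := (hx c).2.1 t
            have hij : i.val < j.val := hib
            by_cases hit : i.val < t
            · by_cases hjt : j.val < t
              · simp only [hit, hjt, if_true]; omega
              · have hiv := ivt i j.val j.2.le (hx c).1 (hx (w j)).1
                  (dom_pre hg c (hib.trans hc.2.2).le (hx c) (hx (w j)).1)
                  (hone c hc.1 hc.2.1 (hib.trans hc.2.2)) hxb
                  (fun t h1 h2 h3 => hex2 ⟨c, t, hc.1, hc.2.1, hc.2.2, h1, h2, h3⟩)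
                  t hit (not_lt.1 hjt)
                have h2 := (hx (w j)).2.1 t
                have h3 : pre (dg w c) t = pre (dg w (w j)) t := by
                  apply pre_congr
                  intro r hr
                  have hr' : r < j := by rw [Fin.lt_def]; omega
                  have hcov := mem_cov.1 hj
                  unfold dg
                  rw [Equiv.symm_apply_apply]
                  have k1 := hcov.2.2 r
                  have k2 := hg.1 r
                  have k3 := fun h => k2 h (w.symm c)
                  rw [Equiv.apply_symm_apply] at k3
                  have k4 : w r ≠ w j := fun e => hr'.ne (w.injective e)
                  congr 1
                  rcases lt_trichotomy r i with h | h | h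
                  · have := k2 h j (h.trans hib)
                    have := k3 h (h.trans (hib.trans hc.2.2))
                    grind
                  · subst h; grind
                  · have := k1 h hr'
                    grind
                simp only [hit, hjt, if_true, if_false]; omega
            · have hjt : ¬ j.val < t := by omega
              simp only [hit, hjt, if_false]; omega
          · rw [(hx c).2.2, Finset.sum_add_distrib, Finset.sum_add_distrib]
            simp
        · have e : dg (w * Equiv.swap i j) c = dg w c := by
            ext r
            rw [dg_c hj c hca hcb, if_neg hc, add_zero]
          rw [e]; exact hx c
      · intro r
        rw [Finset.sum_add_distrib, Equiv.sum_comp (Equiv.swap (w i) (w j)) (fun c => x c r)]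
        simp

lemma fwd_start {n : ℕ} {w : Equiv.Perm (Fin n)} {i : Fin n} (hg : Good w i)
    {x : Fin n → Fin n → ℤ} (hx : Dom w x) : ∃ j ∈ cov w i, ∃ x', Dom (w * Equiv.swap i j) x' ∧
        ∀ r, ∑ c, x' c r = ∑ c, x c r + if r = i then 1 else 0 := by
  -- the largest remaining value
  have hne : ((univ.filter fun s => i ≤ s).image w).Nonempty := ⟨w i, by
    rw [mem_image]; exact ⟨i, by simp, rfl⟩⟩
  obtain ⟨b, hb⟩ : ∃ b, b = Finset.max' _ hne := ⟨_, rfl⟩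
  have hmem := Finset.max'_mem _ hne
  rw [← hb, mem_image] at hmem
  obtain ⟨j, hj, hjb⟩ := hmem
  have hle : ∀ s, i ≤ s → w s ≤ b := fun s hs => hb ▸ Finset.le_max' _ _ (by
    rw [mem_image]; exact ⟨s, by simpa using hs, rfl⟩)
  obtain ⟨s, his, hws⟩ := hg.2
  have hab : w i < b := lt_of_lt_of_le hws (hle s his.le)
  have hij : i < j := by
    have h1 : i ≤ j := by simpa using hj
    refine lt_of_le_of_ne h1 (fun e => ?_)
    rw [← hjb, ← e] at hab
    exact lt_irrefl _ hab
  have hpos : w.symm b = j := by rw [← hjb]; simp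
  refine fwd hg b.val b x rfl hx hab (by rwa [hpos]) ?_
  have e1 : pre (dg w b) i = ∑ r, dg w b r := by
    apply pre_eq_sum
    intro r hr
    unfold dg
    rw [if_neg]
    exact fun h => absurd h.2 (not_lt.2 (hle r hr))
  have e2 := (hx b).2.1 i
  have e3 := (hx b).2.2
  have e4 := pre_le_sum (x b) (i + 1) (fun r => ((hx b).1 r).1)
  have e5 := pre_succ (x b) i
  have := (hx b).1 i
  omega

lemma bwd {n : ℕ} {w : Equiv.Perm (Fin n)} {i j : Fin n} (hg : Good w i) (hj : j ∈ cov w i)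
    {x' : Fin n → Fin n → ℤ} (hx : Dom (w * Equiv.swap i j) x') :
    ∃ x, Dom w x ∧ ∀ r, ∑ c, x' c r = ∑ c, x c r + if r = i then 1 else 0 := by
  have hcov := mem_cov.1 hj
  have hwne : w j ≠ w i := hcov.2.1.ne'
  have ea : dg (w * Equiv.swap i j) (w i) =
      fun r => dg w (w j) r + if r = i then 1 else 0 := funext (dg_a hg hj)
  have hxi : x' (w i) i = 1 := by
    have h1 := (hx (w i)).2.1 (i + 1)
    rw [ea, pre_add, pre_single, pre_succ, pre_succ] at h1
    have h2 : pre (x' (w i)) i ≤ pre (dg w (w j)) i := by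
      apply pre_le
      intro r hr
      rw [dg_pre hg (w j) (by simpa using hcov.1.le) r hr]
      exact ((hx (w i)).1 r).2
    have h3 := (hx (w i)).1 i
    have h4 : 0 ≤ dg w (w j) i := by unfold dg; split_ifs <;> simp
    simp only [lt_add_iff_pos_right, zero_lt_one, if_true] at h1
    omega
  refine ⟨fun c r => x' (Equiv.swap (w i) (w j) c) r +
        if c = w j then (if r = i then -1 else 0) else 0, ?_, ?_⟩
  · intro c
    rcases eq_or_ne c (w i) with rfl | hca
    · have e : dg (w * Equiv.swap i j) (w j) = dg w (w i) := funext (dg_b hg hj)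
      rw [← e]
      simp only [Equiv.swap_apply_left, hwne.symm, if_false, add_zero]
      exact hx (w j)
    rcases eq_or_ne c (w j) with rfl | hcb
    · have e : dg w (w j) = fun r => dg (w * Equiv.swap i j) (w i) r + if r = i then -1 else 0 := by
        ext r
        rw [dg_a hg hj]; split_ifs <;> simp
      rw [e]
      simp only [Equiv.swap_apply_right, if_true]
      refine ⟨?_, ?_, ?_⟩
      · intro r
        have := (hx (w i)).1 r
        beta_reduce
        split_ifs with hr
        · subst hr; omega
        · omega
      · intro t
        rw [pre_add, pre_add]
        have := (hx (w i)).2.1 t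
        omega
      · rw [Finset.sum_add_distrib, Finset.sum_add_distrib, (hx (w i)).2.2]
    simp only [Equiv.swap_apply_of_ne_of_ne hca hcb, hcb, if_false, add_zero]
    change Dom1 _ (x' c)
    by_cases hc : w i < c ∧ c < w j ∧ j < w.symm c
    · have e : dg (w * Equiv.swap i j) c = fun r => dg w c r +
          ((if r = i then 1 else 0) + (if r = j then -1 else 0)) := by
        ext r
        rw [dg_c hj c hca hcb, if_pos hc]
        split_ifs <;> simp
      have hneg : ∀ t, pre (fun r : Fin n => if r = j then (-1 : ℤ) else 0) t =
          if j.val < t then -1 else 0 := by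
        intro t
        unfold pre
        rw [Finset.sum_eq_single j]
        · simp
        · intro b _ hb; simp [hb]
        · simp
      refine ⟨(hx c).1, ?_, ?_⟩
      · intro t
        have h1 := (hx c).2.1 t
        rw [e, pre_add, pre_add, pre_single, hneg] at h1
        have hij : i.val < j.val := hcov.1
        split_ifs at h1 <;> omega
      · rw [(hx c).2.2, e, Finset.sum_add_distrib, Finset.sum_add_distrib]
        simp
    · have e : dg (w * Equiv.swap i j) c = dg w c := by
        ext r
        rw [dg_c hj c hca hcb, if_neg hc, add_zero]
      rw [← e]; exact hx c
  · intro r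
    rw [Finset.sum_add_distrib, Equiv.sum_comp (Equiv.swap (w i) (w j)) (fun c => x' c r)]
    simp
    split_ifs <;> simp

lemma dom_full {n : ℕ} {d v : Fin n → ℤ} (k : ℕ) (hd : ∀ r : Fin n, d r = if r.val < k then 1 else 0)
    (h : Dom1 d v) : v = d := by
  have h1 : ∀ r : Fin n, r.val < k → v r = d r := by
    intro r hr
    have e1 := h.2.1 (r + 1)
    rw [pre_succ, pre_succ] at e1
    have e2 : pre v r ≤ pre d r := by
      apply pre_le
      intro s hs
      rw [hd s, if_pos (by omega)]
      exact (h.1 s).2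
    have := h.1 r
    have e3 := hd r
    rw [if_pos hr] at e3
    omega
  have h2 : ∀ r, 0 ≤ v r - d r := by
    intro r
    by_cases hr : r.val < k
    · rw [h1 r hr]; simp
    · rw [hd r, if_neg hr]; simpa using (h.1 r).1
  have h3 : ∑ r, (v r - d r) = 0 := by
    rw [Finset.sum_sub_distrib, h.2.2, sub_self]
  ext r
  have := (Finset.sum_eq_zero_iff_of_nonneg (fun r _ => h2 r)).1 h3 r (mem_univ r)
  omega

lemma dg_rev {n : ℕ} (c r : Fin n) :
    dg (Fin.revPerm : Equiv.Perm (Fin n)) c r = if r.val < n - 1 - c.val then 1 else 0 := by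
  unfold dg
  congr 1
  simp only [Fin.revPerm_symm, Fin.revPerm_apply, Fin.lt_def, Fin.val_rev, eq_iff_iff]
  omega

lemma dom_self {n : ℕ} (w : Equiv.Perm (Fin n)) : Dom w (dg w) := by
  intro c
  refine ⟨fun r => ?_, fun t => le_rfl, rfl⟩
  unfold dg; split_ifs <;> simp

lemma sum_dg_rev {n : ℕ} (r : Fin n) :
    ∑ c, dg (Fin.revPerm : Equiv.Perm (Fin n)) c r = ((n - 1 - r.val : ℕ) : ℤ) := by
  simp only [dg_rev]
  rw [Finset.sum_boole]
  congr 1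
  have : (univ.filter fun c : Fin n => r.val < n - 1 - c.val) =
      (univ.filter fun c : Fin n => c.val < n - 1 - r.val) := by
    ext c; simp; omega
  rw [this, Fin.card_filter_val_lt]
  omega

theorem supp {n : ℕ} {S : Equiv.Perm (Fin n) → MvPolynomial (Fin n) ℤ} (hS : IsSchub S) :
    ∀ (N : ℕ) (w : Equiv.Perm (Fin n)), Phi w = N → (∀ d, 0 ≤ coeff d (S w)) ∧
      ∀ d, coeff d (S w) ≠ 0 ↔ ∃ x, Dom w x ∧ ∀ r, ∑ c, x c r = (d r : ℤ) := by
  classical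
  intro N
  induction N using Nat.strong_induction_on with
  | _ N ih =>
  intro w hN
  by_cases hw : w = Fin.revPerm
  · subst hw
    have hmon : S Fin.revPerm =
        monomial (Finsupp.equivFunOnFinite.symm fun i : Fin n => n - 1 - (i : ℕ)) 1 := by
      rw [hS.1, monomial_eq]
      simp [Finsupp.prod_fintype]
    rw [hmon]
    simp only [coeff_monomial]
    refine ⟨fun d => by split_ifs <;> simp, fun d => ?_⟩
    constructor
    · intro h
      have h1 : (Finsupp.equivFunOnFinite.symm fun i : Fin n => n - 1 - (i : ℕ)) = d := by
        by_contra hc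
        simp [hc] at h
      refine ⟨_, dom_self _, fun r => ?_⟩
      rw [sum_dg_rev, ← h1]
      simp
    · rintro ⟨x, hx, hs⟩
      have hxe : ∀ c, x c = dg Fin.revPerm c := fun c =>
        dom_full (n - 1 - c.val) (dg_rev c) (hx c)
      have h1 : (Finsupp.equivFunOnFinite.symm fun i : Fin n => n - 1 - (i : ℕ)) = d := by
        ext r
        have := hs r
        simp only [hxe] at this
        rw [sum_dg_rev] at this
        simpa using Int.ofNat.inj this
      simp [h1]
  · obtain ⟨i, hg⟩ := exists_good w hw
    have hco := cotrans hS _ w i rfl hg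
    have hih : ∀ j ∈ cov w i, _ := fun j hj =>
      ih _ (by
        have := mem_cov.1 hj
        rw [← hN]; exact Phi_lt w i j this.1 this.2.1) (w * Equiv.swap i j) rfl
    have hcoeff : ∀ d, coeff d (S w) =
        ∑ j ∈ cov w i, coeff (Finsupp.single i 1 + d) (S (w * Equiv.swap i j)) := by
      intro d
      rw [← coeff_X_mul d i (S w), hco, coeff_sum]
    refine ⟨fun d => ?_, fun d => ?_⟩
    · rw [hcoeff]
      exact Finset.sum_nonneg fun j hj => (hih j hj).1 _
    · have hcont : ∀ r, (((Finsupp.single i 1 + d : Fin n →₀ ℕ) r : ℕ) : ℤ) =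
          (d r : ℤ) + if r = i then 1 else 0 := by
        intro r
        rw [Finsupp.add_apply, Finsupp.single_apply]
        simp only [eq_comm (a := i)]
        push_cast
        ring
      rw [hcoeff, Ne, Finset.sum_eq_zero_iff_of_nonneg (fun j hj => (hih j hj).1 _)]
      push Not
      constructor
      · rintro ⟨j, hj, hne⟩
        obtain ⟨x', hx', hs'⟩ := ((hih j hj).2 _).1 hne
        obtain ⟨x, hx, hs⟩ := bwd hg hj hx'
        refine ⟨x, hx, fun r => ?_⟩
        have h1 := hs r
        rw [hs' r, hcont r] at h1
        linarith
      · rintro ⟨x, hx, hs⟩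
        obtain ⟨j, hj, x', hx', hs'⟩ := fwd_start hg hx
        refine ⟨j, hj, ((hih j hj).2 _).2 ⟨x', hx', fun r => ?_⟩⟩
        rw [hs' r, hs r, hcont r]

/-- Integrality of a real number. -/
def IsI (y : ℝ) : Prop := ∃ m : ℤ, y = m

lemma IsI.add {a b : ℝ} (ha : IsI a) (hb : IsI b) : IsI (a + b) := by
  obtain ⟨m, rfl⟩ := ha
  obtain ⟨k, rfl⟩ := hb
  exact ⟨m + k, by push_cast; rfl⟩

lemma IsI.sub {a b : ℝ} (ha : IsI a) (hb : IsI b) : IsI (a - b) := by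
  obtain ⟨m, rfl⟩ := ha
  obtain ⟨k, rfl⟩ := hb
  exact ⟨m - k, by push_cast; rfl⟩

lemma IsI.sum {ι : Type*} (s : Finset ι) (f : ι → ℝ) (h : ∀ i ∈ s, IsI (f i)) :
    IsI (∑ i ∈ s, f i) := by
  classical
  induction s using Finset.induction_on with
  | empty => exact ⟨0, by simp⟩
  | insert a s ha ih =>
    rw [Finset.sum_insert ha]
    exact (h a (by simp)).add (ih fun i hi => h i (by simp [hi]))

/-- Prefix sums of a real column. -/
noncomputable def preR {n : ℕ} (v : Fin n → ℝ) (t : ℕ) : ℝ := ∑ r, if r.val < t then v r else 0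

lemma preR_succ {n : ℕ} (v : Fin n → ℝ) (i : Fin n) : preR v (i + 1) = preR v i + v i := by
  unfold preR
  have : v i = ∑ r, if r = i then v r else 0 := by simp
  rw [this, ← Finset.sum_add_distrib]
  apply Finset.sum_congr rfl
  intro r _
  have h : r = i ↔ r.val = i.val := Fin.ext_iff
  simp only [h]
  split_ifs <;> first | (exfalso; omega) | simp

lemma preR_zero {n : ℕ} (v : Fin n → ℝ) : preR v 0 = 0 := by simp [preR]

lemma preR_full {n : ℕ} (v : Fin n → ℝ) : preR v n = ∑ r, v r := by simp [preR]

lemma preR_lin {n : ℕ} (v v' : Fin n → ℝ) (a b : ℝ) (t : ℕ) :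
    preR (fun r => a * v r + b * v' r) t = a * preR v t + b * preR v' t := by
  unfold preR
  rw [Finset.mul_sum, Finset.mul_sum, ← Finset.sum_add_distrib]
  apply Finset.sum_congr rfl
  intro r _
  split_ifs <;> simp

lemma preR_cast {n : ℕ} (v : Fin n → ℤ) (t : ℕ) :
    preR (fun r => (v r : ℝ)) t = (pre v t : ℝ) := by
  unfold preR pre
  push_cast
  rfl

lemma last_frac {n : ℕ} (v : Fin n → ℝ) (t : ℕ) : t ≤ n → ¬ IsI (preR v t) →
    ∃ r' : Fin n, r'.val < t ∧ ¬ IsI (v r') ∧ (∀ r : Fin n, r' < r → r.val < t → IsI (v r)) ∧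
      ¬ IsI (preR v (r' + 1)) := by
  induction t with
  | zero => exact fun _ h => absurd ⟨0, by simp [preR_zero]⟩ h
  | succ t ih =>
    intro htn h
    by_cases hv : IsI (v ⟨t, htn⟩)
    · have e := preR_succ v ⟨t, htn⟩
      simp only at e
      obtain ⟨r', h1, h2, h3, h4⟩ := ih (by omega) (fun hh => h (by rw [e]; exact hh.add hv))
      refine ⟨r', by omega, h2, fun r hr1 hr2 => ?_, h4⟩
      by_cases hrt : r.val < t
      · exact h3 r hr1 hrt
      · have : r = ⟨t, htn⟩ := Fin.ext (by simp; omega)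
        rw [this]; exact hv
    · exact ⟨⟨t, htn⟩, by simp, hv, fun r h1 h2 => by
        rw [Fin.lt_def] at h1; simp at h1; omega, h⟩

lemma exists_dir {n : ℕ} (x : Fin n → Fin n → ℝ) (hrow : ∀ r, IsI (∑ c, x c r))
    (hcol : ∀ c, IsI (∑ r, x c r)) (hfr : ∃ c r, ¬ IsI (x c r)) :
    ∃ z : Fin n → Fin n → ℝ, (∃ c r, z c r ≠ 0) ∧ (∀ c r, IsI (x c r) → z c r = 0) ∧
      (∀ r, ∑ c, z c r = 0) ∧
      ∀ c (t : ℕ), t ≤ n → IsI (preR (x c) t) → preR (z c) t = 0 := by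
  classical
  obtain ⟨Fr, hFr⟩ : ∃ Fr : Finset (Fin n × Fin n),
    Fr = univ.filter fun s => ¬ IsI (x s.1 s.2) := ⟨_, rfl⟩
  have hmem : ∀ s, s ∈ Fr ↔ ¬ IsI (x s.1 s.2) := by intro s; simp [hFr]
  obtain ⟨Sg, hSg⟩ : ∃ Sg : Finset (Fin n × Fin n),
    Sg = Fr.filter fun s => IsI (preR (x s.1) (s.2 + 1)) := ⟨_, rfl⟩
  obtain ⟨c0, r0, hcr⟩ := hfr
  have hR0 : r0 ∈ Fr.image Prod.snd := mem_image.2 ⟨(c0, r0), (hmem _).2 hcr, rfl⟩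
  -- rows
  have hcardR : 2 * (Fr.image Prod.snd).card ≤ Fr.card := by
    apply Finset.mul_card_image_le_card
    intro r hr
    obtain ⟨⟨c, r'⟩, hs, hs'⟩ := mem_image.1 hr
    simp only at hs'
    subst hs'
    have hc := (hmem _).1 hs
    have : ∃ c', c' ≠ c ∧ ¬ IsI (x c' r') := by
      by_contra hno
      push Not at hno
      apply hc
      have e := Finset.add_sum_erase univ (fun c => x c r') (mem_univ c)
      have e2 : x c r' = ∑ c, x c r' - ∑ c ∈ univ.erase c, x c r' := by
        rw [← e]; ring
      simp only
      rw [e2]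
      exact (hrow r').sub (IsI.sum _ _ fun c' hc' => hno c' (by simpa using hc'))
    obtain ⟨c', h1, h2⟩ := this
    apply Finset.one_lt_card.2
    refine ⟨(c, r'), ?_, (c', r'), ?_, ?_⟩
    · simp [hmem]; exact hc
    · simp [hmem]; exact h2
    · intro e; exact h1 (Prod.ext_iff.1 e).1.symm
  -- segments
  have hcardS : Sg.card ≤ (Fr \ Sg).card := by
    have hprev : ∀ s ∈ Sg, ∃ s' ∈ Fr \ Sg, s'.1 = s.1 ∧ s'.2 < s.2 ∧
        ∀ r, s'.2 < r → r < s.2 → IsI (x s.1 r) := by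
      rintro ⟨c, r⟩ hs
      rw [hSg, mem_filter, hmem] at hs
      have e := preR_succ (x c) r
      obtain ⟨r', h1, h2, h3, h4⟩ := last_frac (x c) r r.2.le (fun hh => hs.1 (by
        have : x c r = preR (x c) (r + 1) - preR (x c) r := by rw [e]; ring
        rw [this]; exact hs.2.sub hh))
      refine ⟨(c, r'), ?_, rfl, h1, fun r hr1 hr2 => h3 r hr1 hr2⟩
      rw [mem_sdiff, hSg, mem_filter, hmem]
      exact ⟨h2, fun h => h4 h.2⟩
    choose! f hf using hprev
    apply Finset.card_le_card_of_injOn f (fun s hs => (hf s hs).1)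
    intro s hs s' hs' hss
    obtain ⟨-, a1, a2, a3⟩ := hf s hs
    obtain ⟨-, b1, b2, b3⟩ := hf s' hs'
    have hfs : s ∈ Fr := by
      have := mem_coe.1 hs; rw [hSg] at this; exact (mem_filter.1 this).1
    have hfs' : s' ∈ Fr := by
      have := mem_coe.1 hs'; rw [hSg] at this; exact (mem_filter.1 this).1
    rw [hss] at a1 a2 a3
    have hc : s.1 = s'.1 := a1.symm.trans b1
    rcases lt_trichotomy s.2 s'.2 with h | h | h
    · exact absurd (by rw [hc]; exact b3 _ a2 h) ((hmem s).1 hfs)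
    · exact Prod.ext hc h
    · exact absurd (by rw [← hc]; exact a3 _ b2 h) ((hmem s').1 hfs')
  have hSsub : Sg ⊆ Fr := by rw [hSg]; exact filter_subset _ _
  rw [Finset.card_sdiff_of_subset hSsub] at hcardS
  have hSle := Finset.card_le_card hSsub
  -- linear system
  let T : (Fin n × Fin n → ℝ) →ₗ[ℝ]
      ((↥(Frᶜ) → ℝ) × (↥((Fr.image Prod.snd).erase r0) → ℝ) × (↥Sg → ℝ)) :=
    { toFun := fun f => (fun a => f a.1, fun b => ∑ c, f (c, b.1),
        fun s => preR (fun r => f (s.1.1, r)) (s.1.2 + 1))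
      map_add' := by
        intro f g
        refine Prod.ext ?_ (Prod.ext ?_ ?_)
        · ext a; simp
        · ext b; simp [Finset.sum_add_distrib]
        · ext s
          have := preR_lin (fun r => f (s.1.1, r)) (fun r => g (s.1.1, r)) 1 1 (s.1.2 + 1)
          simpa using this
      map_smul' := by
        intro m f
        refine Prod.ext ?_ (Prod.ext ?_ ?_)
        · ext a; simp
        · ext b; simp [Finset.mul_sum]
        · ext s
          have := preR_lin (fun r => f (s.1.1, r)) (fun r => f (s.1.1, r)) m 0 (s.1.2 + 1)
          simpa using this }
  have hrank : Module.finrank ℝ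
      ((↥(Frᶜ) → ℝ) × (↥((Fr.image Prod.snd).erase r0) → ℝ) × (↥Sg → ℝ)) <
      Module.finrank ℝ (Fin n × Fin n → ℝ) := by
    rw [Module.finrank_prod, Module.finrank_prod, Module.finrank_fintype_fun_eq_card,
      Module.finrank_fintype_fun_eq_card, Module.finrank_fintype_fun_eq_card,
      Module.finrank_fintype_fun_eq_card, Fintype.card_coe, Fintype.card_coe, Fintype.card_coe,
      Finset.card_erase_of_mem hR0, Finset.card_compl]
    have h1 : Fr.card ≤ Fintype.card (Fin n × Fin n) := Finset.card_le_univ _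
    have h2 : 0 < (Fr.image Prod.snd).card := Finset.card_pos.2 ⟨r0, hR0⟩
    omega
  have hker := LinearMap.ker_ne_bot_of_finrank_lt (f := T) hrank
  obtain ⟨f, hfT, hf0⟩ := (Submodule.ne_bot_iff _).1 hker
  rw [LinearMap.mem_ker] at hfT
  have k1 : ∀ c r, IsI (x c r) → f (c, r) = 0 := by
    intro c r h
    have hm : (c, r) ∈ Frᶜ := by rw [mem_compl, hmem]; exact not_not.2 h
    exact congrFun (congrArg Prod.fst hfT) ⟨(c, r), hm⟩
  have k2 : ∀ r ∈ (Fr.image Prod.snd).erase r0, ∑ c, f (c, r) = 0 := by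
    intro r hr
    exact congrFun (congrArg (fun y => y.2.1) hfT) ⟨r, hr⟩
  have k3 : ∀ c r, (c, r) ∈ Sg → preR (fun r => f (c, r)) (r + 1) = 0 := by
    intro c r hr
    exact congrFun (congrArg (fun y => y.2.2) hfT) ⟨(c, r), hr⟩
  have k4 : ∀ c (t : ℕ), t ≤ n → IsI (preR (x c) t) → preR (fun r => f (c, r)) t = 0 := by
    intro c t
    induction t with
    | zero => intro _ _; exact preR_zero _
    | succ t ih =>
      intro htn h
      have e := preR_succ (x c) ⟨t, htn⟩
      have e2 := preR_succ (fun r => f (c, r)) ⟨t, htn⟩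
      simp only at e e2
      by_cases hv : IsI (x c ⟨t, htn⟩)
      · rw [e2, k1 c _ hv, add_zero]
        apply ih (by omega)
        have : preR (x c) t = preR (x c) (t + 1) - x c ⟨t, htn⟩ := by rw [e]; ring
        rw [this]; exact h.sub hv
      · apply k3 c ⟨t, htn⟩
        rw [hSg, mem_filter, hmem]
        exact ⟨hv, h⟩
  have k5 : ∀ r, r ≠ r0 → ∑ c, f (c, r) = 0 := by
    intro r hr
    by_cases hm : r ∈ Fr.image Prod.snd
    · exact k2 r (mem_erase.2 ⟨hr, hm⟩)
    · apply Finset.sum_eq_zero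
      intro c _
      apply k1
      by_contra hc
      exact hm (mem_image.2 ⟨(c, r), (hmem _).2 hc, rfl⟩)
  refine ⟨fun c r => f (c, r), ?_, k1, ?_, k4⟩
  · by_contra hno
    push Not at hno
    exact hf0 (funext fun s => hno s.1 s.2)
  · intro r
    by_cases hr : r = r0
    · subst hr
      have htot : ∑ r, ∑ c, f (c, r) = 0 := by
        rw [Finset.sum_comm]
        apply Finset.sum_eq_zero
        intro c _
        have := k4 c n le_rfl (by rw [preR_full]; exact hcol c)
        rwa [preR_full] at this
      rwa [Finset.sum_eq_single r (fun b _ hb => k5 b hb) (by simp)] at htot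
    · exact k5 r hr

/-- The polytope of fractional fillings. -/
def K0 {n : ℕ} (w : Equiv.Perm (Fin n)) : Set (Fin n → Fin n → ℝ) :=
  {x | (∀ c r, 0 ≤ x c r ∧ x c r ≤ 1) ∧
    (∀ c (t : Fin (n + 1)), (pre (dg w c) t : ℝ) ≤ preR (x c) t) ∧
    ∀ c, ∑ r, x c r = ((∑ r, dg w c r : ℤ) : ℝ)}

lemma K0_convex {n : ℕ} (w : Equiv.Perm (Fin n)) : Convex ℝ (K0 w) := by
  intro x hx y hy a b ha hb hab
  refine ⟨fun c r => ?_, fun c t => ?_, fun c => ?_⟩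
  · have h1 := hx.1 c r
    have h2 := hy.1 c r
    simp only [Pi.add_apply, Pi.smul_apply, smul_eq_mul]
    constructor
    · exact add_nonneg (mul_nonneg ha h1.1) (mul_nonneg hb h2.1)
    · nlinarith
  · have h1 := hx.2.1 c t
    have h2 := hy.2.1 c t
    have e := preR_lin (x c) (y c) a b t
    have : preR ((a • x + b • y) c) t = a * preR (x c) t + b * preR (y c) t := e
    rw [this]
    have g1 := mul_le_mul_of_nonneg_left h1 ha
    have g2 := mul_le_mul_of_nonneg_left h2 hb
    have g3 : (pre (dg w c) t : ℝ) = a * (pre (dg w c) t : ℝ) + b * (pre (dg w c) t : ℝ) := by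
      rw [← add_mul, hab, one_mul]
    linarith
  · simp only [Pi.add_apply, Pi.smul_apply, smul_eq_mul]
    rw [Finset.sum_add_distrib, ← Finset.mul_sum, ← Finset.mul_sum, hx.2.2 c, hy.2.2 c,
      ← add_mul, hab, one_mul]

lemma preR_cont {n : ℕ} (c : Fin n) (t : ℕ) :
    Continuous (fun x : Fin n → Fin n → ℝ => preR (x c) t) := by
  unfold preR
  apply continuous_finsetSum
  intro r _
  split_ifs
  · fun_prop
  · fun_prop

lemma K_compact {n : ℕ} (w : Equiv.Perm (Fin n)) (p : Fin n → ℝ) :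
    IsCompact (K0 w ∩ {x | ∀ r, ∑ c, x c r = p r}) := by
  have hbox : IsCompact (Set.Icc (0 : Fin n → Fin n → ℝ) 1) := isCompact_Icc
  refine hbox.of_isClosed_subset ?_ ?_
  · apply IsClosed.inter
    · have : K0 w = (⋂ c, ⋂ r, {x | 0 ≤ x c r ∧ x c r ≤ 1}) ∩
          ((⋂ c, ⋂ t : Fin (n + 1), {x | (pre (dg w c) t : ℝ) ≤ preR (x c) t}) ∩
          (⋂ c, {x | ∑ r, x c r = ((∑ r, dg w c r : ℤ) : ℝ)})) := by
        ext x; simp [K0]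
      rw [this]
      refine IsClosed.inter ?_ (IsClosed.inter ?_ ?_)
      · refine isClosed_iInter fun c => isClosed_iInter fun r => ?_
        have q1 : IsClosed {x : Fin n → Fin n → ℝ | 0 ≤ x c r} :=
          isClosed_le (by fun_prop) (by fun_prop)
        have q2 : IsClosed {x : Fin n → Fin n → ℝ | x c r ≤ 1} :=
          isClosed_le (by fun_prop) (by fun_prop)
        exact q1.inter q2
      · refine isClosed_iInter fun c => isClosed_iInter fun t => ?_
        exact isClosed_le (by fun_prop) (preR_cont c t)
      · refine isClosed_iInter fun c => ?_
        exact isClosed_eq (by fun_prop) (by fun_prop)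
    · have : {x : Fin n → Fin n → ℝ | ∀ r, ∑ c, x c r = p r} = ⋂ r, {x | ∑ c, x c r = p r} := by
        ext x; simp
      rw [this]
      refine isClosed_iInter fun r => isClosed_eq (by fun_prop) (by fun_prop)
  · rintro x ⟨hx, -⟩
    exact ⟨fun c r => (hx.1 c r).1, fun c r => (hx.1 c r).2⟩

theorem exists_int {n : ℕ} (w : Equiv.Perm (Fin n)) (p : Fin n → ℝ) (hp : ∀ r, IsI (p r))
    (hne : (K0 w ∩ {x | ∀ r, ∑ c, x c r = p r}).Nonempty) :
    ∃ x, Dom w x ∧ ∀ r, ((∑ c, x c r : ℤ) : ℝ) = p r := by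
  classical
  obtain ⟨x, hx⟩ := (K_compact w p).extremePoints_nonempty hne
  rw [mem_extremePoints] at hx
  obtain ⟨⟨hxK, hxp⟩, hext⟩ := hx
  have hintegral : ∀ c r, IsI (x c r) := by
    by_contra hno
    push Not at hno
    obtain ⟨z, ⟨c0, r0, hz0⟩, hz1, hz2, hz3⟩ := exists_dir x (fun r => by rw [hxp r]; exact hp r)
      (fun c => by rw [hxK.2.2 c]; exact ⟨_, rfl⟩) hno
    have hcolz : ∀ c, ∑ r, z c r = 0 := by
      intro c
      rw [← preR_full]
      apply hz3 c n le_rfl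
      rw [preR_full, hxK.2.2 c]; exact ⟨_, rfl⟩
    have hev : ∀ᶠ ε in nhds (0 : ℝ), (fun c r => 1 * x c r + ε * z c r) ∈
        K0 w ∩ {x | ∀ r, ∑ c, x c r = p r} := by
      have e1 : ∀ᶠ ε in nhds (0 : ℝ), ∀ c r, 0 ≤ 1 * x c r + ε * z c r ∧
          1 * x c r + ε * z c r ≤ 1 := by
        refine Filter.eventually_all.2 fun c => Filter.eventually_all.2 fun r => ?_
        by_cases h : IsI (x c r)
        · rw [hz1 c r h]
          simpa using hxK.1 c r
        · have h0 : 0 < x c r := lt_of_le_of_ne (hxK.1 c r).1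
            (fun e => h ⟨0, by rw [← e]; simp⟩)
          have h1 : x c r < 1 := lt_of_le_of_ne (hxK.1 c r).2
            (fun e => h ⟨1, by rw [e]; simp⟩)
          have hc : Continuous fun ε : ℝ => 1 * x c r + ε * z c r := by fun_prop
          have ht := hc.tendsto 0
          simp only [one_mul, zero_mul, add_zero] at ht ⊢
          exact (ht.eventually_const_le h0).and (ht.eventually_le_const h1)
      have e2 : ∀ᶠ ε in nhds (0 : ℝ), ∀ c (t : Fin (n + 1)),
          (pre (dg w c) t : ℝ) ≤ 1 * preR (x c) t + ε * preR (z c) t := by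
        refine Filter.eventually_all.2 fun c => Filter.eventually_all.2 fun t => ?_
        by_cases h : IsI (preR (x c) t)
        · rw [hz3 c t (by omega) h]
          simpa using hxK.2.1 c t
        · have h0 : (pre (dg w c) t : ℝ) < preR (x c) t := lt_of_le_of_ne (hxK.2.1 c t)
            (fun e => h ⟨_, e.symm⟩)
          have hc : Continuous fun ε : ℝ => 1 * preR (x c) t + ε * preR (z c) t := by fun_prop
          have ht := hc.tendsto 0
          simp only [one_mul, zero_mul, add_zero] at ht ⊢
          exact ht.eventually_const_le h0
      filter_upwards [e1, e2] with ε h1 h2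
      refine ⟨⟨h1, fun c t => ?_, fun c => ?_⟩, fun r => ?_⟩
      · rw [preR_lin]; exact h2 c t
      · rw [Finset.sum_add_distrib, ← Finset.mul_sum, ← Finset.mul_sum, hcolz, hxK.2.2 c]; ring
      · rw [Finset.sum_add_distrib, ← Finset.mul_sum, ← Finset.mul_sum, hz2, hxp r]; ring
    obtain ⟨δ, hδ, hb⟩ := Metric.eventually_nhds_iff.1 hev
    have m1 := hb (y := δ / 2) (by rw [Real.dist_eq, sub_zero, abs_of_pos] <;> linarith)
    have m2 := hb (y := -(δ / 2)) (by
      rw [Real.dist_eq, sub_zero, abs_neg, abs_of_pos] <;> linarith)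
    have := (hext _ m1 _ m2 ⟨1 / 2, 1 / 2, by norm_num, by norm_num, by norm_num, by
      ext c r
      simp only [Pi.add_apply, Pi.smul_apply, smul_eq_mul]
      ring⟩).1
    have h3 := congrFun (congrFun this c0) r0
    beta_reduce at h3
    have h4 : δ / 2 * z c0 r0 = 0 := by linarith
    rcases mul_eq_zero.1 h4 with h5 | h5
    · linarith
    · exact hz0 h5
  choose y hy using hintegral
  have hyx : x = fun c r => (y c r : ℝ) := by ext c r; exact hy c r
  refine ⟨y, fun c => ⟨fun r => ?_, fun t => ?_, ?_⟩, fun r => ?_⟩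
  · have := hxK.1 c r
    rw [hy c r] at this
    exact ⟨by exact_mod_cast this.1, by exact_mod_cast this.2⟩
  · by_cases ht : t < n + 1
    · have := hxK.2.1 c ⟨t, ht⟩
      rw [hyx, preR_cast] at this
      exact_mod_cast this
    · have hsum := hxK.2.2 c
      rw [hyx] at hsum
      beta_reduce at hsum
      have h1 : ∑ r, y c r = ∑ r, dg w c r := by exact_mod_cast hsum
      have e : ∀ v : Fin n → ℤ, pre v t = ∑ r, v r := fun v =>
        pre_eq_sum v t (fun r hr => absurd r.2 (by omega))
      rw [e, e, h1]
  · have hsum := hxK.2.2 c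
    rw [hyx] at hsum
    beta_reduce at hsum
    exact_mod_cast hsum
  · have := hxp r
    rw [hyx] at this
    push_cast
    exact this

end SNP

/-- Every Schubert polynomial has saturated Newton polytope: every lattice point of
`Newton(𝔖_w)` is the exponent vector of a monomial with nonzero coefficient in `𝔖_w`. -/
theorem stmt8 (n : ℕ) (Schub : Equiv.Perm (Fin n) → MvPolynomial (Fin n) ℤ)
    -- `𝔖_{w₀} = x_1^{n-1} x_2^{n-2} ⋯ x_{n-1}` for the longest permutation `w₀`.
    (hbase : Schub Fin.revPerm = ∏ i : Fin n, X i ^ (n - 1 - (i : ℕ)))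
    -- For adjacent positions `i, j = i+1` with `w(i) < w(j)`: `𝔖_w = ∂_i 𝔖_{w sᵢ}`, i.e.
    -- `(xᵢ - xⱼ) ⬝ 𝔖_w = 𝔖_{w sᵢ} - sᵢ ⬝ 𝔖_{w sᵢ}`.
    (hrec : ∀ (w : Equiv.Perm (Fin n)) (i j : Fin n), (i : ℕ) + 1 = (j : ℕ) → w i < w j →
      (X i - X j) * Schub w =
        Schub (w * Equiv.swap i j) -
          rename (Equiv.swap i j) (Schub (w * Equiv.swap i j)))
    (w : Equiv.Perm (Fin n)) :
    ∀ p : Fin n → ℝ, p ∈ newtonPolytope (Schub w) → (∀ i, ∃ m : ℤ, p i = (m : ℝ)) →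
      ∃ d ∈ (Schub w).support, p = fun i => ((d i : ℕ) : ℝ) := by
  intro p hp hpint
  have hsupp := (SNP.supp (S := Schub) ⟨hbase, hrec⟩ _ w rfl).2
  let L : (Fin n → Fin n → ℝ) →ₗ[ℝ] (Fin n → ℝ) :=
    { toFun := fun x r => ∑ c, x c r
      map_add' := by intro x y; ext r; simp [Finset.sum_add_distrib]
      map_smul' := by intro m x; ext r; simp [Finset.mul_sum] }
  have hsub : (fun (d : Fin n →₀ ℕ) (i : Fin n) => ((d i : ℕ) : ℝ)) '' ↑(Schub w).support ⊆
      L '' (SNP.K0 w) := by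
    rintro _ ⟨d, hd, rfl⟩
    obtain ⟨x, hx, hs⟩ := (hsupp d).1 (mem_support_iff.1 (mem_coe.1 hd))
    refine ⟨fun c r => (x c r : ℝ), ⟨fun c r => ?_, fun c t => ?_, fun c => ?_⟩, ?_⟩
    · beta_reduce
      exact ⟨by exact_mod_cast ((hx c).1 r).1, by exact_mod_cast ((hx c).1 r).2⟩
    · rw [SNP.preR_cast]; exact_mod_cast (hx c).2.1 t
    · beta_reduce
      exact_mod_cast (hx c).2.2
    · ext r
      change ∑ c, (x c r : ℝ) = ((d r : ℕ) : ℝ)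
      exact_mod_cast hs r
  obtain ⟨x, hx, hxp⟩ := convexHull_min hsub ((SNP.K0_convex w).linear_image L) hp
  obtain ⟨y, hy, hyp⟩ := SNP.exists_int w p hpint ⟨x, hx, fun r => congrFun hxp r⟩
  have hnn : ∀ r, 0 ≤ ∑ c, y c r := fun r => Finset.sum_nonneg fun c _ => ((hy c).1 r).1
  refine ⟨Finsupp.equivFunOnFinite.symm fun r => (∑ c, y c r).toNat, ?_, ?_⟩
  · rw [mem_support_iff, hsupp]
    refine ⟨y, hy, fun r => ?_⟩
    simp [Int.toNat_of_nonneg (hnn r)]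
  · ext r
    rw [← hyp r]
    have : ((∑ c, y c r).toNat : ℤ) = ∑ c, y c r := Int.toNat_of_nonneg (hnn r)
    simp only [Finsupp.coe_equivFunOnFinite_symm]
    exact_mod_cast this.symm
end
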